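/- Let u, v be nontrivial elements of F₂ with ‖u‖ ≥ ‖v‖, and put k = ‖u‖+1. Suppose that for every chain ψ₁ of type (C1) of length at most 2‖u‖+5 one has: ‖σ^{k+1}ψ₁(u)‖ = ‖σ^{k}ψ₁(u)‖ if and only if ‖σ^{k+1}ψ₁(v)‖ = ‖σ^{k}ψ₁(v)‖, and ‖τ^{k+1}ψ₁(u)‖ = ‖τ^{k}ψ₁(u)‖ if and only if ‖τ^{k+1}ψ₁(v)‖ = ‖τ^{k}ψ₁(v)‖; and that for every chain ψ₂ of type (C2) of length at most 2‖u‖+5 one has: ‖σ^{-k-1}ψ₂(u)‖ = ‖σ^{-k}ψ₂(u)‖ if and only if ‖σ^{-k-1}ψ₂(v)‖ = ‖σ^{-k}ψ₂(v)‖, and ‖τ^{-k-1}ψ₂(u)‖ = ‖τ^{-k}ψ₂(u)‖ if and only if ‖τ^{-k-1}ψ₂(v)‖ = ‖τ^{-k}ψ₂(v)‖. Then u and v are boundedly translation equivalent in F₂, i.e., there exists a real C > 0 such that ‖φ(u)‖ ≤ C·‖φ(v)‖ and ‖φ(v)‖ ≤ C·‖φ(u)‖ for every automorphism φ of F₂.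 -/

import Mathlib

noncomputable section

/-- The free group of rank two. -/
abbrev F : Type := FreeGroup (Fin 2)

/-- The generator `a`. -/
def ga : F := FreeGroup.of 0

/-- The generator `b`. -/
def gb : F := FreeGroup.of 1

/-- Build an automorphism of `F` from images of the generators together with
an explicit inverse. -/
def mkAut (x y xi yi : F)
    (h1 : FreeGroup.lift ![xi, yi] x = ga)
    (h2 : FreeGroup.lift ![xi, yi] y = gb)
    (h3 : FreeGroup.lift ![x, y] xi = ga)
    (h4 : FreeGroup.lift ![x, y] yi = gb) : MulAut F :=
  MonoidHom.toMulEquiv (FreeGroup.lift ![x, y]) (FreeGroup.lift ![xi, yi])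
    (by
      ext i
      fin_cases i
      · simpa [ga] using h1
      · simpa [gb] using h2)
    (by
      ext i
      fin_cases i
      · simpa [ga] using h3
      · simpa [gb] using h4)

/-- `σ : a ↦ ab, b ↦ b`. -/
def σ : MulAut F :=
  mkAut (ga * gb) gb (ga * gb⁻¹) gb
    (by simp [ga, gb]) (by simp [ga, gb]) (by simp [ga, gb]) (by simp [ga, gb])

/-- `τ : a ↦ a, b ↦ ba`. -/
def τ : MulAut F :=
  mkAut ga (gb * ga) ga (gb * ga⁻¹)
    (by simp [ga, gb]) (by simp [ga, gb]) (by simp [ga, gb]) (by simp [ga, gb])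

/-- `δ₁ : a ↦ b⁻¹ab, b ↦ b`. -/
def δ₁ : MulAut F :=
  mkAut (gb⁻¹ * ga * gb) gb (gb * ga * gb⁻¹) gb
    (by simp [ga, gb, mul_assoc]) (by simp [ga, gb]) (by simp [ga, gb, mul_assoc]) (by simp [ga, gb])

/-- `δ₂ : a ↦ bab⁻¹, b ↦ b`. -/
def δ₂ : MulAut F :=
  mkAut (gb * ga * gb⁻¹) gb (gb⁻¹ * ga * gb) gb
    (by simp [ga, gb, mul_assoc]) (by simp [ga, gb]) (by simp [ga, gb, mul_assoc]) (by simp [ga, gb])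

/-- `δ₃ : a ↦ a, b ↦ a⁻¹ba`. -/
def δ₃ : MulAut F :=
  mkAut ga (ga⁻¹ * gb * ga) ga (ga * gb * ga⁻¹)
    (by simp [ga, gb]) (by simp [ga, gb, mul_assoc]) (by simp [ga, gb]) (by simp [ga, gb, mul_assoc])

/-- `δ₄ : a ↦ a, b ↦ aba⁻¹`. -/
def δ₄ : MulAut F :=
  mkAut ga (ga * gb * ga⁻¹) ga (ga⁻¹ * gb * ga)
    (by simp [ga, gb]) (by simp [ga, gb, mul_assoc]) (by simp [ga, gb]) (by simp [ga, gb, mul_assoc])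

/-- `π : a ↦ b, b ↦ a⁻¹`. -/
def pi' : MulAut F :=
  mkAut gb ga⁻¹ gb⁻¹ ga
    (by simp [ga, gb]) (by simp [ga, gb]) (by simp [ga, gb]) (by simp [ga, gb])

/-- Word length of (the reduced word representing) an element of `F`. -/
def len (w : F) : ℕ := w.toWord.length

/-- Cyclic length: minimal word length among all conjugates. -/
def cyclen (w : F) : ℕ := sInf {n | ∃ g : F, len (g * w * g⁻¹) = n}

/-- The chain `τ^{m_k}σ^{l_k}⋯τ^{m_1}σ^{l_1}` of type (C1) determined by the list
`[(l_k, m_k), …, (l_1, m_1)]` of pairs of exponents. -/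
def chainC1 (c : List (ℕ × ℕ)) : MulAut F :=
  (c.map fun p => τ ^ p.2 * σ ^ p.1).prod

/-- The chain `τ^{-m_k}σ^{-l_k}⋯τ^{-m_1}σ^{-l_1}` of type (C2) determined by the list
`[(l_k, m_k), …, (l_1, m_1)]` of pairs of exponents. -/
def chainC2 (c : List (ℕ × ℕ)) : MulAut F :=
  (c.map fun p => (τ ^ p.2)⁻¹ * (σ ^ p.1)⁻¹).prod

/-- Number of factors of `σ` in a chain. -/
def sigmaCount (c : List (ℕ × ℕ)) : ℕ := (c.map Prod.fst).sum

/-- Number of factors of `τ` in a chain. -/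
def tauCount (c : List (ℕ × ℕ)) : ℕ := (c.map Prod.snd).sum

/-- The length `Σ (l_i + m_i)` of a chain. -/
def chainLen (c : List (ℕ × ℕ)) : ℕ := sigmaCount c + tauCount c

/-- A Whitehead automorphism of type (W1): it permutes `{a, a⁻¹, b, b⁻¹}`. -/
def IsW1 (β : MulAut F) : Prop :=
  β ga ∈ ({ga, ga⁻¹, gb, gb⁻¹} : Set F) ∧ β gb ∈ ({ga, ga⁻¹, gb, gb⁻¹} : Set F)

/-- A chain of type (C1). -/
def IsC1 (φ : MulAut F) : Prop := ∃ c : List (ℕ × ℕ), c ≠ [] ∧ φ = chainC1 c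

/-- A chain of type (C2). -/
def IsC2 (φ : MulAut F) : Prop := ∃ c : List (ℕ × ℕ), c ≠ [] ∧ φ = chainC2 c

/-- A positive element: a product of the generators `a` and `b`. -/
def IsPositive (w : F) : Prop := w ∈ Submonoid.closure ({ga, gb} : Set F)

/-- The four automorphisms `δ₁, δ₂, δ₃, δ₄`. -/
def δIdx : Fin 4 → MulAut F := ![δ₁, δ₂, δ₃, δ₄]

/-! By Nielsen's theorem every automorphism of the free group is, up to an inner automorphism and an
automorphism permuting `a^{±1}`, `b^{±1}`, a product of letters `σ` and `τ`, possibly preceded by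
`b ↦ b⁻¹`. Up to inner automorphisms, conjugation by `b ↦ b⁻¹` inverts `σ` and `τ`, so it exchanges
chains of type (C1) with chains of type (C2).

Applying `σ` to `y` shifts the exponents of `b` between consecutive letters `a^{±1}` by fixed
integers, so that only the letters of `y` itself can cancel under the powers of `σ`. The number of
letters of `y` that can still cancel is at most `‖y‖`, and it drops at each letter `σ` or `τ`
applied, until an image is reached on which the powers of the last letter change the length
linearly. The slope is then a nonnegative integer, and the slopes for later letters are determined
by finitely many initial ones. The hypothesis says that these slopes vanish for `u` if and only if
they vanish for `v`. Being bounded integers, they are comparable up to a constant, and so are the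
lengths of all later images. -/

section LetterCounts

open FreeGroup hiding map_mul map_inv map_one

variable {α β : Type*}

lemma map_mk_of_signed (f : FreeGroup α →* FreeGroup β) (p : α → β) (e : α → Bool)
    (h : ∀ i, f (of i) = mk [(p i, e i)]) (L : List (α × Bool)) :
    f (mk L) = mk (L.map fun q => (p q.1, q.2 == e q.1)) := by
  have letter (q : α × Bool) : f (mk [q]) = mk [(p q.1, q.2 == e q.1)] := by
    obtain ⟨j, s⟩ := q
    cases s
    · rw [show (mk [(j, false)] : FreeGroup α) = (of j)⁻¹ from rfl, map_inv, h, inv_mk]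
      simp [invRev]
    · rw [show (mk [(j, true)] : FreeGroup α) = of j from rfl, h]
      simp
  induction L with
  | nil => exact map_one f
  | cons q L ih =>
    rw [← List.singleton_append, ← mul_mk, map_mul, ih, letter, mul_mk, List.map_append,
      List.map_singleton]

lemma isCyclicallyReduced_map_signed {p : α → β} (hp : Function.Injective p) (e : α → Bool)
    {L : List (α × Bool)} (h : IsCyclicallyReduced L) :
    IsCyclicallyReduced (L.map fun q => (p q.1, q.2 == e q.1)) := by
  refine ⟨?_, fun a ha b hb hab => ?_⟩
  · unfold FreeGroup.IsReduced
    rw [List.isChain_map]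
    refine List.IsChain.imp (fun a b hab hp' => ?_) h.1
    simp only [hab (hp hp'), hp hp']
  · rw [List.getLast?_map, Option.mem_def, Option.map_eq_some_iff] at ha
    rw [List.head?_map, Option.mem_def, Option.map_eq_some_iff] at hb
    obtain ⟨a, ha, rfl⟩ := ha
    obtain ⟨b, hb, rfl⟩ := hb
    simp only [hp hab, h.2 a ha b hb (hp hab)]

variable [DecidableEq α] [DecidableEq β]

lemma countP_fst_invRev (i : α) (L : List (α × Bool)) :
    (invRev L).countP (fun p => p.1 = i) = L.countP (fun p => p.1 = i) := by
  simp only [invRev, List.countP_reverse, List.countP_map]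
  rfl

/-- The number of occurrences of the letters `i` and `i⁻¹` in the reduced word of `x`. -/
def letterCount (i : α) (x : FreeGroup α) : ℕ := x.toWord.countP (fun p => p.1 = i)

/-- The number of occurrences of the letters `i` and `i⁻¹` in a cyclically reduced conjugate of
`x`. -/
def cyclicCount (i : α) (x : FreeGroup α) : ℕ :=
  (reduceCyclically x.toWord).countP (fun p => p.1 = i)

lemma letterCount_mul_le (i : α) (x y : FreeGroup α) :
    letterCount i (x * y) ≤ letterCount i x + letterCount i y := by
  simpa only [letterCount, List.countP_append] using (toWord_mul_sublist x y).countP_le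

lemma letterCount_inv (i : α) (x : FreeGroup α) : letterCount i x⁻¹ = letterCount i x := by
  rw [letterCount, toWord_inv, countP_fst_invRev, letterCount]

lemma letterCount_pow_succ (i : α) (x : FreeGroup α) (n : ℕ) :
    letterCount i (x ^ (n + 1)) = (n + 1) * cyclicCount i x +
      2 * (reduceCyclically.conjugator x.toWord).countP (fun p => p.1 = i) := by
  rw [letterCount, toWord_pow,
    reduceCyclically.reduce_flatten_replicate_succ isReduced_toWord, List.countP_append,
    List.countP_append, countP_fst_invRev, List.countP_flatten, List.map_replicate,
    List.sum_replicate, smul_eq_mul, cyclicCount]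
  ring

-- `cyclicCount i x` is the growth rate of `n ↦ letterCount i (x ^ n)`, which conjugation changes
-- only by a bounded amount.
lemma cyclicCount_conj_le (i : α) (g x : FreeGroup α) :
    cyclicCount i (g * x * g⁻¹) ≤ cyclicCount i x := by
  set K := 2 * (reduceCyclically.conjugator x.toWord).countP (fun p => p.1 = i)
  have growth (n : ℕ) : (n + 1) * cyclicCount i (g * x * g⁻¹) ≤
      (n + 1) * cyclicCount i x + (K + 2 * letterCount i g) := by
    have h₁ := letterCount_pow_succ i (g * x * g⁻¹) n
    have h₂ := letterCount_pow_succ i x n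
    have h₃ := letterCount_mul_le i (g * x ^ (n + 1)) g⁻¹
    have h₄ := letterCount_mul_le i g (x ^ (n + 1))
    rw [conj_pow] at h₁
    rw [letterCount_inv] at h₃
    omega
  by_contra! h
  have := growth (K + 2 * letterCount i g)
  nlinarith

lemma cyclicCount_conj (i : α) (g x : FreeGroup α) :
    cyclicCount i (g * x * g⁻¹) = cyclicCount i x := by
  refine (cyclicCount_conj_le i g x).antisymm ?_
  have h := cyclicCount_conj_le i g⁻¹ (g * x * g⁻¹)
  rwa [show g⁻¹ * (g * x * g⁻¹) * g⁻¹⁻¹ = x by group] at h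

lemma reduceCyclically_eq_self {L : List (α × Bool)} (h : IsCyclicallyReduced L) :
    reduceCyclically L = L := by
  induction L using List.bidirectionalRec with
  | nil => simp
  | singleton a => simp
  | cons_append a l b _ =>
    rw [reduceCyclically.cons_append, if_neg, List.cons_append]
    rintro ⟨h₁, h₂⟩
    have := (isCyclicallyReduced_cons_append_iff.1 h).2 h₁
    simp [this] at h₂

lemma cyclicCount_mk (i : α) {L : List (α × Bool)} (h : IsCyclicallyReduced L) :
    cyclicCount i (mk L) = L.countP (fun p => p.1 = i) := by
  rw [cyclicCount, toWord_mk, h.isReduced.reduce_eq, reduceCyclically_eq_self h]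

lemma cyclicCount_of_isConj_mk (i : α) {L : List (α × Bool)} (hL : IsCyclicallyReduced L)
    {x : FreeGroup α} (h : IsConj (mk L) x) : cyclicCount i x = L.countP (fun p => p.1 = i) := by
  obtain ⟨g, rfl⟩ := isConj_iff.1 h
  rw [cyclicCount_conj, cyclicCount_mk i hL]

lemma eq_conj_mk_reduceCyclically (x : FreeGroup α) :
    x = mk (reduceCyclically.conjugator x.toWord) * mk (reduceCyclically x.toWord) *
      (mk (reduceCyclically.conjugator x.toWord))⁻¹ := by
  rw [inv_mk, mul_mk, mul_mk, reduceCyclically.conj_conjugator_reduceCyclically, mk_toWord]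

lemma exists_isCyclicallyReduced_conj {α : Type*} (x : FreeGroup α) :
    ∃ (g : FreeGroup α) (L : List (α × Bool)), IsCyclicallyReduced L ∧ x = g * mk L * g⁻¹ := by
  classical
  exact ⟨_, _, reduceCyclically.isCyclicallyReduced isReduced_toWord, eq_conj_mk_reduceCyclically x⟩

lemma cyclicCount_map_signed (f : FreeGroup α →* FreeGroup β) {p : α → β}
    (hp : Function.Injective p) (e : α → Bool) (h : ∀ i, f (of i) = mk [(p i, e i)]) (i : α)
    (x : FreeGroup α) : cyclicCount (p i) (f x) = cyclicCount i x := by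
  obtain ⟨g, L, hL, rfl⟩ := exists_isCyclicallyReduced_conj x
  rw [map_mul, map_mul, map_inv, cyclicCount_conj, cyclicCount_conj, map_mk_of_signed f p e h,
    cyclicCount_mk _ hL, cyclicCount_mk _ (isCyclicallyReduced_map_signed hp e hL),
    List.countP_map]
  simp only [Function.comp_def, hp.eq_iff]

end LetterCounts

section CyclicLength

open FreeGroup

lemma countP_zero_add_countP_one (L : List (Fin 2 × Bool)) :
    L.countP (fun p => p.1 = 0) + L.countP (fun p => p.1 = 1) = L.length := by
  rw [L.length_eq_countP_add_countP (fun p => p.1 = 0)]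
  congr 2
  ext ⟨i, s⟩
  fin_cases i <;> simp

lemma cyclicCount_add_le_len (y : F) : cyclicCount 0 y + cyclicCount 1 y ≤ len y := by
  rw [cyclicCount, cyclicCount, countP_zero_add_countP_one, len]
  conv_rhs => rw [← reduceCyclically.conj_conjugator_reduceCyclically y.toWord]
  simp only [List.length_append]
  omega

lemma cyclen_eq (y : F) : cyclen y = cyclicCount 0 y + cyclicCount 1 y := by
  apply le_antisymm
  · obtain ⟨g, L, hL, rfl⟩ := exists_isCyclicallyReduced_conj y
    refine Nat.sInf_le ⟨g⁻¹, ?_⟩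
    rw [cyclicCount_conj, cyclicCount_conj, cyclicCount_mk _ hL, cyclicCount_mk _ hL,
      countP_zero_add_countP_one, show g⁻¹ * (g * mk L * g⁻¹) * g⁻¹⁻¹ = mk L by group, len,
      toWord_mk, hL.isReduced.reduce_eq]
  · refine le_csInf ⟨_, 1, rfl⟩ ?_
    rintro _ ⟨g, rfl⟩
    simpa only [cyclicCount_conj] using cyclicCount_add_le_len (g * y * g⁻¹)

lemma cyclen_pos {y : F} (h : y ≠ 1) : 0 < cyclen y := by
  obtain ⟨g, L, hL, rfl⟩ := exists_isCyclicallyReduced_conj y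
  rw [cyclen_eq, cyclicCount_conj, cyclicCount_conj, cyclicCount_mk _ hL, cyclicCount_mk _ hL,
    countP_zero_add_countP_one, List.length_pos_iff]
  rintro rfl
  exact h (by rw [← one_eq_mk, mul_one, mul_inv_cancel])

end CyclicLength

section OuterEq

variable {G : Type*} [Group G]

/-- Equality of automorphisms of `G` modulo inner automorphisms, that is, equality in the outer
automorphism group. -/
def OuterEq (φ ψ : MulAut G) : Prop := ∃ g : G, φ = MulAut.conj g * ψ

namespace OuterEq

variable {φ ψ χ φ' ψ' : MulAut G}

lemma refl (φ : MulAut G) : OuterEq φ φ := ⟨1, by rw [map_one, one_mul]⟩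

lemma symm : OuterEq φ ψ → OuterEq ψ φ := by
  rintro ⟨g, rfl⟩
  exact ⟨g⁻¹, by rw [map_inv, inv_mul_cancel_left]⟩

lemma trans : OuterEq φ ψ → OuterEq ψ χ → OuterEq φ χ := by
  rintro ⟨g, rfl⟩ ⟨h, rfl⟩
  exact ⟨g * h, by rw [map_mul, mul_assoc]⟩

lemma mul : OuterEq φ ψ → OuterEq φ' ψ' → OuterEq (φ * φ') (ψ * ψ') := by
  rintro ⟨g, rfl⟩ ⟨h, rfl⟩
  refine ⟨g * ψ h, MulEquiv.ext fun x => ?_⟩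
  simp [MulAut.conj_apply, mul_assoc]

lemma pow (h : OuterEq φ ψ) (n : ℕ) : OuterEq (φ ^ n) (ψ ^ n) := by
  induction n with
  | zero => exact refl 1
  | succ n ih => exact ih.mul h

lemma cyclicCount_eq {α : Type*} [DecidableEq α] {φ ψ : MulAut (FreeGroup α)}
    (h : OuterEq φ ψ) (i : α) (y : FreeGroup α) :
    cyclicCount i (φ y) = cyclicCount i (ψ y) := by
  obtain ⟨g, rfl⟩ := h
  rw [MulAut.mul_apply, MulAut.conj_apply, cyclicCount_conj]

lemma cyclen_eq {φ ψ : MulAut F} (h : OuterEq φ ψ) (y : F) : cyclen (φ y) = cyclen (ψ y) := by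
  rw [_root_.cyclen_eq, _root_.cyclen_eq, h.cyclicCount_eq, h.cyclicCount_eq]

end OuterEq

end OuterEq

section Automorphisms

lemma mkAut_ga (x y xi yi : F) (h₁ h₂ h₃ h₄) : mkAut x y xi yi h₁ h₂ h₃ h₄ ga = x := by
  simp [mkAut, MonoidHom.toMulEquiv, ga]

lemma mkAut_gb (x y xi yi : F) (h₁ h₂ h₃ h₄) : mkAut x y xi yi h₁ h₂ h₃ h₄ gb = y := by
  simp [mkAut, MonoidHom.toMulEquiv, gb]

/-- The automorphism `a ↦ b, b ↦ a`. -/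
def swapAB : MulAut F :=
  mkAut gb ga gb ga (by simp [ga, gb]) (by simp [ga, gb]) (by simp [ga, gb]) (by simp [ga, gb])

/-- The automorphism `a ↦ a, b ↦ b⁻¹`. -/
def invB : MulAut F :=
  mkAut ga gb⁻¹ ga gb⁻¹
    (by simp [ga, gb]) (by simp [ga, gb]) (by simp [ga, gb]) (by simp [ga, gb])

/-- The automorphism `a ↦ a⁻¹, b ↦ b⁻¹`. -/
def invAB : MulAut F :=
  mkAut ga⁻¹ gb⁻¹ ga⁻¹ gb⁻¹
    (by simp [ga, gb]) (by simp [ga, gb]) (by simp [ga, gb]) (by simp [ga, gb])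

@[simp] lemma σ_ga : σ ga = ga * gb := mkAut_ga ..
@[simp] lemma σ_gb : σ gb = gb := mkAut_gb ..
@[simp] lemma τ_ga : τ ga = ga := mkAut_ga ..
@[simp] lemma τ_gb : τ gb = gb * ga := mkAut_gb ..
@[simp] lemma swapAB_ga : swapAB ga = gb := mkAut_ga ..
@[simp] lemma swapAB_gb : swapAB gb = ga := mkAut_gb ..
@[simp] lemma invB_ga : invB ga = ga := mkAut_ga ..
@[simp] lemma invB_gb : invB gb = gb⁻¹ := mkAut_gb ..
@[simp] lemma invAB_ga : invAB ga = ga⁻¹ := mkAut_ga ..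
@[simp] lemma invAB_gb : invAB gb = gb⁻¹ := mkAut_gb ..

lemma mulAut_ext {φ ψ : MulAut F} (ha : φ ga = ψ ga) (hb : φ gb = ψ gb) : φ = ψ := by
  have : φ.toMonoidHom = ψ.toMonoidHom := by
    ext i
    fin_cases i
    exacts [ha, hb]
  exact MulEquiv.ext fun x => DFunLike.congr_fun this x

lemma outerEq_of_generators {φ ψ : MulAut F} (g : F) (ha : φ ga = g * ψ ga * g⁻¹)
    (hb : φ gb = g * ψ gb * g⁻¹) : OuterEq φ ψ :=
  ⟨g, mulAut_ext ha hb⟩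

lemma swapAB_mul_self : swapAB * swapAB = 1 := mulAut_ext (by simp) (by simp)

lemma invB_mul_self : invB * invB = 1 := mulAut_ext (by simp) (by simp)

lemma swapAB_mul_σ : swapAB * σ = τ * swapAB := mulAut_ext (by simp) (by simp)

lemma swapAB_mul_τ : swapAB * τ = σ * swapAB := mulAut_ext (by simp) (by simp)

lemma invB_mul_swapAB : invB * swapAB = swapAB * invAB * invB := mulAut_ext (by simp) (by simp)

lemma σ_inv_eq : σ⁻¹ = invB * σ * invB :=
  inv_eq_of_mul_eq_one_left (mulAut_ext (by simp) (by simp))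

lemma outerEq_τ_inv : OuterEq τ⁻¹ (invB * τ * invB) :=
  ⟨ga, inv_eq_of_mul_eq_one_right (mulAut_ext (by simp) (by simp))⟩

lemma outerEq_σ_mul_invB_mul_τ : OuterEq (σ * invB * τ) (swapAB * σ) :=
  outerEq_of_generators gb⁻¹ (by simp [mul_assoc]) (by simp [mul_assoc])

lemma outerEq_τ_mul_invB_mul_τ : OuterEq (τ * invB * τ) invB :=
  outerEq_of_generators ga⁻¹ (by simp [mul_assoc]) (by simp [mul_assoc])

lemma outerEq_σ_mul_invAB : OuterEq (σ * invAB) (invAB * σ) :=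
  outerEq_of_generators gb⁻¹ (by simp [mul_assoc]) (by simp [mul_assoc])

lemma outerEq_τ_mul_invAB : OuterEq (τ * invAB) (invAB * τ) :=
  outerEq_of_generators ga⁻¹ (by simp [mul_assoc]) (by simp [mul_assoc])

lemma cyclicCount_swapAB_zero (y : F) : cyclicCount 0 (swapAB y) = cyclicCount 1 y :=
  cyclicCount_map_signed swapAB.toMonoidHom (p := Equiv.swap 0 1) (Equiv.injective _)
    (fun _ => true) (fun i => by fin_cases i <;> [exact swapAB_ga; exact swapAB_gb]) 1 y

lemma cyclicCount_swapAB_one (y : F) : cyclicCount 1 (swapAB y) = cyclicCount 0 y :=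
  cyclicCount_map_signed swapAB.toMonoidHom (p := Equiv.swap 0 1) (Equiv.injective _)
    (fun _ => true) (fun i => by fin_cases i <;> [exact swapAB_ga; exact swapAB_gb]) 0 y

lemma cyclicCount_invB (i : Fin 2) (y : F) : cyclicCount i (invB y) = cyclicCount i y :=
  cyclicCount_map_signed invB.toMonoidHom Function.injective_id ![true, false]
    (fun i => by fin_cases i <;> [exact invB_ga; exact invB_gb]) i y

lemma cyclicCount_invAB (i : Fin 2) (y : F) : cyclicCount i (invAB y) = cyclicCount i y :=
  cyclicCount_map_signed invAB.toMonoidHom Function.injective_id (fun _ => false)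
    (fun i => by fin_cases i <;> [exact invAB_ga; exact invAB_gb]) i y

lemma σ_zpow_gb (n : ℤ) : (σ ^ n) gb = gb :=
  (MulAction.stabilizer (MulAut F) gb).zpow_mem (show σ • gb = gb from σ_gb) n

lemma σ_zpow_ga (n : ℤ) : (σ ^ n) ga = ga * gb ^ n := by
  induction n using Int.induction_on with
  | zero => simp
  | succ n ih => rw [zpow_add_one, MulAut.mul_apply, σ_ga, map_mul, ih, σ_zpow_gb,
      zpow_add_one, mul_assoc]
  | pred n ih =>
    simp only [zpow_sub_one, σ_inv_eq, MulAut.mul_apply, invB_ga, σ_ga, map_mul, invB_gb, map_inv,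
      ih, σ_zpow_gb, mul_assoc]

end Automorphisms

section Syllables

open FreeGroup hiding map_mul map_inv map_one

/-- The word `b ^ m`. -/
def bWord (m : ℤ) : List (Fin 2 × Bool) := List.replicate m.natAbs (1, decide (0 ≤ m))

/-- The word `a^{±1} b^{m₁} ⋯ a^{±1} b^{m_r}` given by its list of syllables `a^{±1} b^{m_i}`; a
syllable is recorded as the sign of `a` (`true` for `a`, `false` for `a⁻¹`) and the exponent of
`b`. -/
def syllableWord : List (Bool × ℤ) → List (Fin 2 × Bool)
  | [] => []
  | (s, m) :: l => (0, s) :: (bWord m ++ syllableWord l)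

/-- The sign of the first syllable of `l`, or `e` if there is none: the sign of the letter `a^{±1}`
which follows a syllable in a word that continues with `l` and then with `a^{±1}` of sign `e`. -/
def nextSign : List (Bool × ℤ) → Bool → Bool
  | [], e => e
  | (s, _) :: _, _ => s

/-- The change of the exponent of `b` in a syllable of sign `s`, followed by the sign `t`, under
`σ`. -/
def syllableSlope (s t : Bool) : ℤ := if s = t then (if s then 1 else -1) else 0

/-- The effect of `σ ^ n` on the syllables `l` of a word that is followed by `a^{±1}` of sign
`e`. -/
def shearSyllables (n : ℤ) : List (Bool × ℤ) → Bool → List (Bool × ℤ)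
  | [], _ => []
  | (s, m) :: l, e => (s, m + n * syllableSlope s (nextSign l e)) :: shearSyllables n l e

/-- The exponents of the syllables paired with their slopes. -/
def syllableProfile : List (Bool × ℤ) → Bool → List (ℤ × ℤ)
  | [], _ => []
  | (s, m) :: l, e => (m, syllableSlope s (nextSign l e)) :: syllableProfile l e

/-- The letters `b` by which `σ ^ n` makes a word that is followed by `a^{±1}` of sign `e` differ
from the word of its sheared syllables. -/
def shearCorrection (n : ℤ) (e : Bool) : F := if e then 1 else gb ^ (-n)

lemma mk_bWord (m : ℤ) : mk (bWord m) = gb ^ m := by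
  have mk_replicate (s : Bool) (n : ℕ) :
      (mk (List.replicate n (1, s)) : F) = mk [(1, s)] ^ n := by
    rw [pow_mk, List.flatten_replicate_singleton]
  obtain ⟨n, rfl | rfl⟩ := m.eq_nat_or_neg
  · rw [bWord, mk_replicate]
    simp [gb, of]
  · rcases n.eq_zero_or_pos with rfl | hn
    · rfl
    · rw [bWord, mk_replicate]
      simp [gb, of, invRev, show n ≠ 0 by omega]

lemma mk_syllableWord_cons (s : Bool) (m : ℤ) (l : List (Bool × ℤ)) :
    mk (syllableWord ((s, m) :: l)) = (if s then ga else ga⁻¹) * gb ^ m * mk (syllableWord l) := by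
  rw [syllableWord, ← List.singleton_append, ← mul_mk, ← mul_mk, mk_bWord, mul_assoc]
  cases s <;> rfl

lemma σ_zpow_mk_syllableWord (n : ℤ) (l : List (Bool × ℤ)) (e : Bool) :
    (σ ^ n) (mk (syllableWord l)) * shearCorrection n e =
      shearCorrection n (nextSign l e) * mk (syllableWord (shearSyllables n l e)) := by
  induction l with
  | nil =>
    rw [show (mk (syllableWord []) : F) = 1 from rfl, map_one, one_mul]
    exact (mul_one _).symm
  | cons p l ih =>
    obtain ⟨s, m⟩ := p
    rw [shearSyllables, mk_syllableWord_cons, mk_syllableWord_cons, map_mul, mul_assoc, ih,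
      nextSign]
    generalize nextSign l e = t
    cases s <;> cases t <;>
      simp only [shearCorrection, syllableSlope, map_mul, map_zpow, map_inv, σ_zpow_ga, σ_zpow_gb,
        if_true, if_false, Bool.false_eq_true, reduceCtorEq] <;> group

lemma countP_zero_syllableWord (l : List (Bool × ℤ)) :
    (syllableWord l).countP (fun p => p.1 = 0) = l.length := by
  induction l with
  | nil => rfl
  | cons p l ih => simp [syllableWord, bWord, List.countP_replicate, ih]

lemma countP_one_syllableWord (l : List (Bool × ℤ)) :
    ((syllableWord l).countP (fun p => p.1 = 1) : ℤ) = (l.map fun p => |p.2|).sum := by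
  induction l with
  | nil => rfl
  | cons p l ih => simp [syllableWord, bWord, List.countP_replicate, ih]

lemma nextSign_shearSyllables (n : ℤ) (l : List (Bool × ℤ)) (e : Bool) :
    nextSign (shearSyllables n l e) e = nextSign l e := by
  cases l <;> rfl

lemma length_shearSyllables (n : ℤ) (l : List (Bool × ℤ)) (e : Bool) :
    (shearSyllables n l e).length = l.length := by
  induction l with
  | nil => rfl
  | cons p l ih => simp [shearSyllables, ih]

lemma length_syllableProfile (l : List (Bool × ℤ)) (e : Bool) :
    (syllableProfile l e).length = l.length := by
  induction l with
  | nil => rfl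
  | cons p l ih => simp [syllableProfile, ih]

lemma sum_abs_shearSyllables (n : ℤ) (l : List (Bool × ℤ)) (e : Bool) :
    ((shearSyllables n l e).map fun p => |p.2|).sum =
      ((syllableProfile l e).map fun p => |p.1 + n * p.2|).sum := by
  induction l with
  | nil => rfl
  | cons p l ih => simp [shearSyllables, syllableProfile, ih]

lemma isReduced_cons_bWord_append_cons_iff (s t : Bool) (m : ℤ) (R : List (Fin 2 × Bool)) :
    FreeGroup.IsReduced ((0, s) :: (bWord m ++ (0, t) :: R)) ↔
      (s ≠ t → m ≠ 0) ∧ FreeGroup.IsReduced ((0, t) :: R) := by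
  have replicate_append (n : ℕ) (e : Bool) :
      FreeGroup.IsReduced (List.replicate n ((1 : Fin 2), e) ++ (0, t) :: R) ↔
        FreeGroup.IsReduced ((0, t) :: R) := by
    induction n with
    | zero => rfl
    | succ n ih =>
      rw [← ih]
      cases n <;> simp [List.replicate_succ]
  rcases eq_or_ne m 0 with rfl | hm
  · simp [bWord]
  · obtain ⟨n, hn⟩ := Nat.exists_eq_succ_of_ne_zero (Int.natAbs_ne_zero.2 hm)
    rw [← replicate_append (n + 1) (decide (0 ≤ m)), bWord, hn]
    simp [List.replicate_succ, hm]

lemma exists_syllableWord_append_eq_cons (l : List (Bool × ℤ)) (e : Bool) :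
    ∃ R, syllableWord l ++ [(0, e)] = (0, nextSign l e) :: R := by
  cases l with
  | nil => exact ⟨[], rfl⟩
  | cons p l => exact ⟨_, rfl⟩

lemma isReduced_syllableWord_cons_append_iff (s e : Bool) (m : ℤ) (l : List (Bool × ℤ)) :
    FreeGroup.IsReduced (syllableWord ((s, m) :: l) ++ [(0, e)]) ↔
      (s ≠ nextSign l e → m ≠ 0) ∧ FreeGroup.IsReduced (syllableWord l ++ [(0, e)]) := by
  obtain ⟨R, hR⟩ := exists_syllableWord_append_eq_cons l e
  rw [syllableWord, List.cons_append, List.append_assoc, hR, isReduced_cons_bWord_append_cons_iff]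

lemma isReduced_shearSyllables (n : ℤ) {l : List (Bool × ℤ)} {e : Bool}
    (h : FreeGroup.IsReduced (syllableWord l ++ [(0, e)])) :
    FreeGroup.IsReduced (syllableWord (shearSyllables n l e) ++ [(0, e)]) := by
  induction l with
  | nil => exact h
  | cons p l ih =>
    rw [isReduced_syllableWord_cons_append_iff] at h
    rw [shearSyllables, isReduced_syllableWord_cons_append_iff, nextSign_shearSyllables]
    refine ⟨fun hs => ?_, ih h.2⟩
    rw [syllableSlope, if_neg hs, mul_zero, add_zero]
    exact h.1 hs

lemma syllableProfile_entry {l : List (Bool × ℤ)} {e : Bool}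
    (h : FreeGroup.IsReduced (syllableWord l ++ [(0, e)])) {p : ℤ × ℤ}
    (hp : p ∈ syllableProfile l e) : p.2 = 1 ∨ p.2 = -1 ∨ p.2 = 0 ∧ p.1 ≠ 0 := by
  induction l with
  | nil => simp [syllableProfile] at hp
  | cons q l ih =>
    rw [isReduced_syllableWord_cons_append_iff] at h
    rcases List.mem_cons.1 hp with rfl | hp
    · dsimp only [syllableSlope]
      split_ifs with h₁ h₂
      · exact .inl rfl
      · exact .inr (.inl rfl)
      · exact .inr (.inr ⟨rfl, h.1 h₁⟩)
    · exact ih h.2 hp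

lemma isCyclicallyReduced_syllableWord {l : List (Bool × ℤ)} {e : Bool}
    (h : FreeGroup.IsReduced (syllableWord l ++ [(0, e)])) (he : nextSign l e = e) :
    IsCyclicallyReduced (syllableWord l) := by
  obtain ⟨h₁, -, h₂⟩ := List.isChain_append.1 h
  refine ⟨h₁, fun a ha b hb => ?_⟩
  cases l with
  | nil => cases ha
  | cons p l =>
    rw [syllableWord, List.head?_cons, Option.mem_some_iff] at hb
    rw [nextSign] at he
    subst hb he
    exact h₂ a ha _ rfl

lemma cons_bWord {s : Bool} {k : ℤ} (h : k ≠ 0 → s = decide (0 ≤ k)) :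
    (1, s) :: bWord k = bWord (if s then k + 1 else k - 1) := by
  have hb (m : ℤ) : bWord m = List.replicate m.natAbs (1, decide (0 ≤ m)) := rfl
  cases s
  · have hk : k ≤ 0 := by
      by_contra! hk
      exact absurd (h hk.ne') (by simpa using hk.le)
    rw [if_neg (by decide), hb (k - 1), show (k - 1).natAbs = k.natAbs + 1 by omega,
      List.replicate_succ, decide_eq_false (show ¬ 0 ≤ k - 1 by omega), hb]
    rcases hk.eq_or_lt with rfl | hk
    · rfl
    · rw [decide_eq_false (by omega)]
  · have hk : 0 ≤ k := by
      by_contra! hk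
      exact absurd (h hk.ne) (by simpa using hk)
    rw [if_pos rfl, hb (k + 1), show (k + 1).natAbs = k.natAbs + 1 by omega,
      List.replicate_succ, decide_eq_true (show 0 ≤ k + 1 by omega), hb,
      decide_eq_true hk]

lemma exists_eq_bWord_append_syllableWord {W : List (Fin 2 × Bool)} (h : FreeGroup.IsReduced W) :
    ∃ (k : ℤ) (l : List (Bool × ℤ)), W = bWord k ++ syllableWord l := by
  induction W with
  | nil => exact ⟨0, [], rfl⟩
  | cons x W ih =>
    obtain ⟨k, l, rfl⟩ := ih (List.IsChain.tail h)
    obtain ⟨i, s⟩ := x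
    fin_cases i
    · exact ⟨0, (s, k) :: l, rfl⟩
    · have hs : k ≠ 0 → s = decide (0 ≤ k) := fun hk => by
        obtain ⟨n, hn⟩ := Nat.exists_eq_succ_of_ne_zero (Int.natAbs_ne_zero.2 hk)
        rw [bWord, hn, List.replicate_succ] at h
        exact (List.isChain_cons_cons.1 h).1 rfl
      exact ⟨if s then k + 1 else k - 1, l, by rw [← cons_bWord hs]; rfl⟩

lemma isConj_mk_append_comm {α : Type*} (L₁ L₂ : List (α × Bool)) :
    IsConj (mk (L₁ ++ L₂)) (mk (L₂ ++ L₁)) := by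
  refine isConj_iff.2 ⟨(mk L₁)⁻¹, ?_⟩
  rw [← mul_mk, ← mul_mk, inv_inv, inv_mul_cancel_left]

lemma isConj_zpow_gb_or_syllableWord (y : F) :
    (∃ m : ℤ, IsConj (gb ^ m) y) ∨ ∃ (l : List (Bool × ℤ)) (e : Bool),
      FreeGroup.IsReduced (syllableWord l ++ [(0, e)]) ∧ nextSign l e = e ∧
        IsConj (mk (syllableWord l)) y := by
  obtain ⟨g, L, hL, rfl⟩ := exists_isCyclicallyReduced_conj y
  have conj {x : F} (hx : IsConj x (mk L)) : IsConj x (g * mk L * g⁻¹) :=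
    hx.trans (isConj_iff.2 ⟨g, rfl⟩)
  obtain ⟨k, _ | ⟨⟨s, m⟩, l⟩, rfl⟩ := exists_eq_bWord_append_syllableWord hL.isReduced
  · rw [syllableWord, List.append_nil, mk_bWord]
    exact .inl ⟨k, isConj_iff.2 ⟨g, rfl⟩⟩
  · have hred : FreeGroup.IsReduced
        ((0, s) :: (bWord m ++ syllableWord l ++ bWord k) ++ [(0, s)]) := by
      refine (hL.flatten_replicate 2).isReduced.infix ?_
      refine ⟨bWord k, bWord m ++ syllableWord l, ?_⟩
      simp [syllableWord, List.replicate_succ]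
    obtain ⟨m', l', hl'⟩ := exists_eq_bWord_append_syllableWord
      (W := bWord m ++ syllableWord l ++ bWord k) (hred.infix ⟨[(0, s)], [(0, s)], by simp⟩)
    rw [hl'] at hred
    refine .inr ⟨(s, m') :: l', s, hred, rfl, conj ?_⟩
    rw [syllableWord, ← hl', ← List.cons_append, ← List.cons_append]
    exact isConj_mk_append_comm _ _

end Syllables

section Profiles

/-- The number of letters `a^{±1}` in a cyclically reduced conjugate of `y`; it is an integer, so
that counts can be subtracted. -/
def aCount (y : F) : ℤ := cyclicCount 0 y

/-- The number of letters `b^{±1}` in a cyclically reduced conjugate of `y`; it is an integer, so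
that counts can be subtracted. -/
def bCount (y : F) : ℤ := cyclicCount 1 y

lemma bCount_nonneg (y : F) : 0 ≤ bCount y := Int.natCast_nonneg _

lemma OuterEq.aCount_eq {φ ψ : MulAut F} (h : OuterEq φ ψ) (y : F) :
    aCount (φ y) = aCount (ψ y) :=
  congrArg Nat.cast (h.cyclicCount_eq 0 y)

lemma OuterEq.bCount_eq {φ ψ : MulAut F} (h : OuterEq φ ψ) (y : F) :
    bCount (φ y) = bCount (ψ y) :=
  congrArg Nat.cast (h.cyclicCount_eq 1 y)

/-- The pairs `(p, q)` in `T` describe the syllables of `y` and their slopes under `σ`: every power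
`σ ^ n` turns the exponent `p` of a syllable into `p + n * q`, and leaves the number of letters
`a^{±1}` as it is. The number `c` of further letters `b^{±1}` is nonzero only if `y` is conjugate to
a power of `b`. -/
structure IsProfile (c : ℤ) (T : List (ℤ × ℤ)) (y : F) : Prop where
  nonneg : 0 ≤ c
  entry : ∀ p ∈ T, p.2 = 1 ∨ p.2 = -1 ∨ p.2 = 0 ∧ p.1 ≠ 0
  aCount_σ_zpow : ∀ n : ℤ, aCount ((σ ^ n) y) = T.length
  bCount_σ_zpow : ∀ n : ℤ, bCount ((σ ^ n) y) = c + (T.map fun p => |p.1 + n * p.2|).sum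

lemma isCyclicallyReduced_bWord (m : ℤ) : FreeGroup.IsCyclicallyReduced (bWord m) := by
  refine ⟨List.isChain_replicate_of_rel _ fun _ => rfl, fun a ha b hb _ => ?_⟩
  rw [List.eq_of_mem_replicate (List.mem_of_getLast? ha),
    List.eq_of_mem_replicate (List.mem_of_head? hb)]

lemma isProfile_of_isConj_zpow_gb {m : ℤ} {y : F} (h : IsConj (gb ^ m) y) :
    IsProfile |m| [] y := by
  have hσ (n : ℤ) : IsConj (FreeGroup.mk (bWord m)) ((σ ^ n) y) := by
    have := (σ ^ n).toMonoidHom.map_isConj h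
    rwa [MulEquiv.coe_toMonoidHom, map_zpow, σ_zpow_gb, ← mk_bWord] at this
  refine ⟨abs_nonneg m, by simp, fun n => ?_, fun n => ?_⟩
  · rw [aCount, cyclicCount_of_isConj_mk 0 (isCyclicallyReduced_bWord m) (hσ n)]
    simp [bWord, List.countP_replicate]
  · rw [bCount, cyclicCount_of_isConj_mk 1 (isCyclicallyReduced_bWord m) (hσ n)]
    simp [bWord, List.countP_replicate]

lemma isProfile_syllableProfile {l : List (Bool × ℤ)} {e : Bool} {y : F}
    (hl : FreeGroup.IsReduced (syllableWord l ++ [(0, e)])) (he : nextSign l e = e)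
    (h : IsConj (FreeGroup.mk (syllableWord l)) y) : IsProfile 0 (syllableProfile l e) y := by
  have hσ (n : ℤ) :
      IsConj (FreeGroup.mk (syllableWord (shearSyllables n l e))) ((σ ^ n) y) := by
    have shear := σ_zpow_mk_syllableWord n l e
    rw [he] at shear
    exact (isConj_iff.2 ⟨shearCorrection n e, by rw [← shear, mul_inv_cancel_right]; rfl⟩).trans
      ((σ ^ n).toMonoidHom.map_isConj h)
  have hred (n : ℤ) : FreeGroup.IsCyclicallyReduced (syllableWord (shearSyllables n l e)) :=
    isCyclicallyReduced_syllableWord (isReduced_shearSyllables n hl)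
      (by rw [nextSign_shearSyllables, he])
  refine ⟨le_rfl, fun p hp => syllableProfile_entry hl hp, fun n => ?_, fun n => ?_⟩
  · rw [aCount, cyclicCount_of_isConj_mk 0 (hred n) (hσ n), countP_zero_syllableWord,
      length_shearSyllables, length_syllableProfile]
  · rw [bCount, cyclicCount_of_isConj_mk 1 (hred n) (hσ n), countP_one_syllableWord,
      sum_abs_shearSyllables, zero_add]

lemma exists_isProfile (y : F) : ∃ c T, IsProfile c T y := by
  rcases isConj_zpow_gb_or_syllableWord y with ⟨m, h⟩ | ⟨l, e, hl, he, h⟩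
  · exact ⟨_, _, isProfile_of_isConj_zpow_gb h⟩
  · exact ⟨_, _, isProfile_syllableProfile hl he h⟩

lemma aCount_σ (y : F) : aCount (σ y) = aCount y := by
  obtain ⟨c, T, h⟩ := exists_isProfile y
  simpa using (h.aCount_σ_zpow 1).trans (h.aCount_σ_zpow 0).symm

lemma IsProfile.map_shear {c : ℤ} {T : List (ℤ × ℤ)} {y : F} (h : IsProfile c T y) :
    IsProfile c (T.map fun p => (p.1 + p.2, p.2)) (σ y) := by
  have zpow_σ (n : ℤ) : (σ ^ n) (σ y) = (σ ^ (n + 1)) y := by rw [zpow_add_one, MulAut.mul_apply]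
  refine ⟨h.nonneg, ?_, fun n => ?_, fun n => ?_⟩
  · simp only [List.forall_mem_map]
    intro p hp
    have := h.entry p hp
    lia
  · rw [zpow_σ, h.aCount_σ_zpow, List.length_map]
  · simp only [zpow_σ, h.bCount_σ_zpow, List.map_map, Function.comp_def, add_mul, one_mul,
      add_assoc, add_comm]

/-- The number of letters `b^{±1}` of `y` that are cancelled when high powers of `σ` are applied.
For large `n` the number of letters `b^{±1}` in `σ ^ n y` is an affine function of `n`, and the
definition is half of the difference between `bCount y` and the value at `0` of this affine
function; for the purpose of this extrapolation `n = bCount y` is large. -/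
def σCancellable (y : F) : ℤ :=
  let N := bCount y
  (N - bCount ((σ ^ N) y) + N * (bCount ((σ ^ (N + 1)) y) - bCount ((σ ^ N) y))) / 2

namespace IsProfile

variable {c : ℤ} {T : List (ℤ × ℤ)} {y : F}

lemma aCount_eq (h : IsProfile c T y) : aCount y = T.length := h.aCount_σ_zpow 0

lemma bCount_eq (h : IsProfile c T y) : bCount y = c + (T.map fun p => |p.1|).sum := by
  simpa using h.bCount_σ_zpow 0

lemma bCount_σ_eq (h : IsProfile c T y) : bCount (σ y) = c + (T.map fun p => |p.1 + p.2|).sum := by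
  simpa using h.bCount_σ_zpow 1

lemma bCount_σ_σ_eq (h : IsProfile c T y) :
    bCount (σ (σ y)) = c + (T.map fun p => |p.1 + 2 * p.2|).sum := h.bCount_σ_zpow 2

lemma abs_fst_le_bCount (h : IsProfile c T y) : ∀ p ∈ T, |p.1| ≤ bCount y := by
  intro p hp
  rw [h.bCount_eq]
  refine le_add_of_nonneg_of_le h.nonneg (List.single_le_sum ?_ _ (List.mem_map_of_mem hp))
  exact List.forall_mem_map.2 fun p _ => abs_nonneg p.1

lemma σCancellable_eq (h : IsProfile c T y) :
    σCancellable y = (T.map fun p => max 0 (-(p.1 * p.2))).sum := by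
  have affine : ∀ N, (∀ p ∈ T, |p.1| ≤ N) → ∀ p ∈ T,
      2 * max 0 (-(p.1 * p.2)) + (|p.1 + N * p.2| + N * |p.1 + N * p.2|) =
        |p.1| + N * |p.1 + (N + 1) * p.2| := by
    rintro N hN ⟨m, q⟩ hp
    obtain ⟨lower, upper⟩ := abs_le.1 (hN _ hp)
    rcases h.entry _ hp with rfl | rfl | ⟨rfl, -⟩ <;> simp only at lower upper ⊢
    · rw [abs_of_nonneg (a := m + N * 1) (by linarith),
        abs_of_nonneg (a := m + (N + 1) * 1) (by linarith)]
      rcases le_total 0 m with hm | hm <;> simp [hm, abs_of_nonneg, abs_of_nonpos] <;> ring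
    · rw [abs_of_nonpos (a := m + N * -1) (by linarith),
        abs_of_nonpos (a := m + (N + 1) * -1) (by linarith)]
      rcases le_total 0 m with hm | hm <;> simp [hm, abs_of_nonneg, abs_of_nonpos] <;> ring
    · simp
  have sum_affine := congrArg List.sum (List.map_congr_left (affine _ h.abs_fst_le_bCount))
  simp only [List.sum_map_add, List.sum_map_mul_left] at sum_affine
  rw [σCancellable, h.bCount_σ_zpow, h.bCount_σ_zpow]
  refine Int.ediv_eq_of_eq_mul_right two_ne_zero ?_
  nth_rewrite 1 [h.bCount_eq]
  linear_combination -sum_affine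

lemma σCancellable_σ_eq (h : IsProfile c T y) :
    σCancellable (σ y) = (T.map fun p => max 0 (-((p.1 + p.2) * p.2))).sum := by
  rw [h.map_shear.σCancellable_eq, List.map_map]
  rfl

end IsProfile

end Profiles

section Cancellation

lemma aCount_swapAB (y : F) : aCount (swapAB y) = bCount y :=
  congrArg Nat.cast (cyclicCount_swapAB_zero y)

lemma bCount_swapAB (y : F) : bCount (swapAB y) = aCount y :=
  congrArg Nat.cast (cyclicCount_swapAB_one y)

lemma aCount_invB (y : F) : aCount (invB y) = aCount y := congrArg Nat.cast (cyclicCount_invB 0 y)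

@[simp] lemma swapAB_swapAB (y : F) : swapAB (swapAB y) = y :=
  DFunLike.congr_fun swapAB_mul_self y

lemma invB_invB (y : F) : invB (invB y) = y := DFunLike.congr_fun invB_mul_self y

lemma swapAB_σ (y : F) : swapAB (σ y) = τ (swapAB y) := DFunLike.congr_fun swapAB_mul_σ y

lemma swapAB_τ (y : F) : swapAB (τ y) = σ (swapAB y) := DFunLike.congr_fun swapAB_mul_τ y

lemma bCount_τ (y : F) : bCount (τ y) = bCount y := by
  rw [← aCount_swapAB, swapAB_τ, aCount_σ, aCount_swapAB]

lemma aCount_τ (y : F) : aCount (τ y) = bCount (σ y) :=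
  calc aCount (τ y) = aCount (σ (invB (τ y))) := by rw [aCount_σ, aCount_invB]
    _ = aCount (swapAB (σ y)) := outerEq_σ_mul_invB_mul_τ.aCount_eq y
    _ = bCount (σ y) := aCount_swapAB _

lemma bCount_σ_inv (y : F) : bCount (σ⁻¹ y) = bCount (σ (invB y)) := by
  rw [σ_inv_eq]
  exact congrArg Nat.cast (cyclicCount_invB 1 _)

lemma bCount_σ_zpow_neg_one_τ (y : F) : bCount ((σ ^ (-1 : ℤ)) (τ y)) = aCount y :=
  calc bCount ((σ ^ (-1 : ℤ)) (τ y)) = bCount (σ (invB (τ y))) := by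
        rw [zpow_neg_one, bCount_σ_inv]
    _ = bCount (swapAB (σ y)) := outerEq_σ_mul_invB_mul_τ.bCount_eq y
    _ = aCount y := by rw [bCount_swapAB, aCount_σ]

lemma bCount_σ_zpow_neg_two_τ (y : F) : bCount ((σ ^ (-2 : ℤ)) (τ y)) = bCount (σ (σ y)) := by
  have outer : OuterEq (σ * (σ * invB * τ)) (σ * (swapAB * σ)) :=
    (OuterEq.refl σ).mul outerEq_σ_mul_invB_mul_τ
  calc bCount ((σ ^ (-2 : ℤ)) (τ y)) = bCount (σ⁻¹ (σ⁻¹ (τ y))) := by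
        rw [zpow_neg, zpow_two, mul_inv_rev, MulAut.mul_apply]
    _ = bCount (σ (σ (invB (τ y)))) := by
        rw [bCount_σ_inv, σ_inv_eq, MulAut.mul_apply, MulAut.mul_apply, invB_invB]
    _ = bCount (σ (swapAB (σ y))) := outer.bCount_eq y
    _ = bCount (σ (σ y)) := by rw [← swapAB_τ, bCount_swapAB, aCount_τ]

/-- The number of letters `b^{±1}` that cancel when `σ` is applied to a cyclically reduced conjugate
of `y`. It is also the number of letters `a^{±1}` that cancel under `τ`. -/
def cancellation (y : F) : ℤ := aCount y + bCount y - bCount (σ y)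

lemma bCount_σ (y : F) : bCount (σ y) = aCount y + bCount y - cancellation y := by
  rw [cancellation, sub_sub_cancel]

lemma cancellation_swapAB (y : F) : cancellation (swapAB y) = cancellation y := by
  rw [cancellation, cancellation, aCount_swapAB, bCount_swapAB, ← swapAB_τ, bCount_swapAB, aCount_τ,
    add_comm]

lemma cancellation_nonneg (y : F) : 0 ≤ cancellation y := by
  obtain ⟨c, T, h⟩ := exists_isProfile y
  have : (T.map fun p => |p.1 + p.2|).sum ≤ (T.map fun p => |p.1| + 1).sum :=
    List.sum_le_sum fun p hp => by grind [h.entry p hp]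
  simp only [List.sum_map_add, List.map_const', List.sum_replicate, nsmul_one] at this
  rw [cancellation, h.aCount_eq, h.bCount_eq, h.bCount_σ_eq]
  linarith

lemma cancellation_σ_le (y : F) : cancellation (σ y) ≤ cancellation y := by
  obtain ⟨c, T, h⟩ := exists_isProfile y
  have : (T.map fun p => |p.1 + p.2| + |p.1 + p.2|).sum ≤
      (T.map fun p => |p.1| + |p.1 + 2 * p.2|).sum :=
    List.sum_le_sum fun p hp => by grind [h.entry p hp]
  simp only [List.sum_map_add] at this
  rw [cancellation, cancellation, aCount_σ, h.bCount_eq, h.bCount_σ_eq, h.bCount_σ_σ_eq]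
  linarith

lemma σCancellable_nonneg (y : F) : 0 ≤ σCancellable y := by
  obtain ⟨c, T, h⟩ := exists_isProfile y
  rw [h.σCancellable_eq]
  exact List.sum_nonneg (List.forall_mem_map.2 fun p _ => le_max_left _ _)

lemma σCancellable_le_bCount (y : F) : σCancellable y ≤ bCount y := by
  obtain ⟨c, T, h⟩ := exists_isProfile y
  rw [h.σCancellable_eq, h.bCount_eq]
  exact le_add_of_nonneg_of_le h.nonneg
    (List.sum_le_sum fun p hp => by rcases h.entry p hp with h | h | h <;> grind)

lemma σCancellable_σ_lt {y : F} (hy : 0 < σCancellable y) :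
    σCancellable (σ y) < σCancellable y := by
  obtain ⟨c, T, h⟩ := exists_isProfile y
  rw [h.σCancellable_eq] at hy ⊢
  rw [h.σCancellable_σ_eq]
  refine List.sum_lt_sum _ _ (fun p hp => ?_) ?_
  · rcases h.entry p hp with h | h | h <;> grind
  · by_contra! hle
    refine hy.ne' (List.sum_eq_zero (List.forall_mem_map.2 fun p hp => ?_))
    have := hle p hp
    rcases h.entry p hp with h | h | h <;> grind

lemma two_mul_σCancellable_σ_le (y : F) :
    2 * σCancellable (σ y) ≤ 2 * σCancellable y - (cancellation y - cancellation (σ y)) := by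
  obtain ⟨c, T, h⟩ := exists_isProfile y
  have : (T.map fun p => 2 * max 0 (-((p.1 + p.2) * p.2)) + (|p.1| + |p.1 + 2 * p.2|)).sum ≤
      (T.map fun p => 2 * max 0 (-(p.1 * p.2)) + (|p.1 + p.2| + |p.1 + p.2|)).sum :=
    List.sum_le_sum fun p hp => by rcases h.entry p hp with h | h | h <;> grind
  simp only [List.sum_map_add, List.sum_map_mul_left] at this
  rw [cancellation, cancellation, aCount_σ, h.bCount_eq, h.bCount_σ_eq, h.bCount_σ_σ_eq,
    h.σCancellable_eq, h.σCancellable_σ_eq]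
  linarith

lemma cancellation_le_aCount_add (y : F) : cancellation y ≤ aCount y + 2 * σCancellable y := by
  obtain ⟨c, T, h⟩ := exists_isProfile y
  have : (T.map fun p => |p.1|).sum ≤
      (T.map fun p => |p.1 + p.2| + 2 * max 0 (-(p.1 * p.2))).sum :=
    List.sum_le_sum fun p hp => by rcases h.entry p hp with h | h | h <;> grind
  simp only [List.sum_map_add, List.sum_map_mul_left] at this
  rw [cancellation, h.bCount_eq, h.bCount_σ_eq, h.σCancellable_eq]
  linarith

lemma two_mul_σCancellable_τ_le (y : F) :
    2 * σCancellable (τ y) ≤ cancellation y - cancellation (σ y) := by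
  obtain ⟨c, T, h⟩ := exists_isProfile (τ y)
  have : (T.map fun p => 2 * max 0 (-(p.1 * p.2)) + 2).sum ≤
      (T.map fun p => |p.1| + |p.1 + -2 * p.2|).sum :=
    List.sum_le_sum fun p hp => by rcases h.entry p hp with h | h | h <;> grind
  simp only [List.sum_map_add, List.sum_map_mul_left, List.map_const', List.sum_replicate,
    nsmul_eq_mul] at this
  have length_eq := h.aCount_eq
  have bCount_eq := h.bCount_eq
  have bCount_σ_σ_eq : bCount (σ (σ y)) = c + (T.map fun p => |p.1 + -2 * p.2|).sum :=
    (bCount_σ_zpow_neg_two_τ y).symm.trans (h.bCount_σ_zpow (-2))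
  rw [aCount_τ] at length_eq
  rw [bCount_τ] at bCount_eq
  rw [cancellation, cancellation, aCount_σ, h.σCancellable_eq, bCount_σ_σ_eq, bCount_eq, length_eq]
  linarith [h.nonneg]

lemma cancellation_σ_τ_eq {y : F} (hy : cancellation (τ y) = cancellation y) :
    cancellation (σ (τ y)) = cancellation (σ y) := by
  obtain ⟨c, T, h⟩ := exists_isProfile (τ y)
  have upper : (T.map fun p => |p.1 + -2 * p.2| + 2).sum ≤
      (T.map fun p => |p.1 + 2 * p.2| + (|p.1 + -1 * p.2| + |p.1 + -1 * p.2|)).sum :=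
    List.sum_le_sum fun p hp => by rcases h.entry p hp with h | h | h <;> grind
  have lower : (T.map fun p => |p.1 + 2 * p.2| + 2).sum ≤
      (T.map fun p => |p.1 + -2 * p.2| + (|p.1 + p.2| + |p.1 + p.2|)).sum :=
    List.sum_le_sum fun p hp => by rcases h.entry p hp with h | h | h <;> grind
  simp only [List.sum_map_add, List.map_const', List.sum_replicate, nsmul_eq_mul] at upper lower
  have length_eq := h.aCount_eq
  have bCount_eq := h.bCount_eq
  have aCount_eq : aCount y = c + (T.map fun p => |p.1 + -1 * p.2|).sum :=
    (bCount_σ_zpow_neg_one_τ y).symm.trans (h.bCount_σ_zpow (-1))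
  have bCount_σ_σ_eq : bCount (σ (σ y)) = c + (T.map fun p => |p.1 + -2 * p.2|).sum :=
    (bCount_σ_zpow_neg_two_τ y).symm.trans (h.bCount_σ_zpow (-2))
  rw [aCount_τ] at length_eq
  rw [bCount_τ] at bCount_eq
  simp only [cancellation, aCount_σ, aCount_τ, bCount_τ, aCount_eq, bCount_eq, length_eq,
    h.bCount_σ_eq, h.bCount_σ_σ_eq, bCount_σ_σ_eq] at hy ⊢
  linarith [h.nonneg]

end Cancellation

section Stability

/-- The number of letters `a^{±1}` of `y` that are cancelled when high powers of `τ` are applied. -/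
def τCancellable (y : F) : ℤ := σCancellable (swapAB y)

/-- The potential of the argument, which drops at every application of `σ` or `τ` until the effect
of the generator has become predictable. -/
def totalCancellable (y : F) : ℤ := τCancellable y + σCancellable y

/-- The elements on which all further powers of `σ` act with constant cancellation. -/
structure IsσStable (y : F) : Prop where
  σCancellable_eq_zero : σCancellable y = 0
  two_mul_τCancellable : 2 * τCancellable y = cancellation y - cancellation (τ y)

/-- The elements on which all further powers of `τ` act with constant cancellation. -/
def IsτStable (y : F) : Prop := IsσStable (swapAB y)

lemma τCancellable_nonneg (y : F) : 0 ≤ τCancellable y := σCancellable_nonneg _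

lemma τCancellable_swapAB (y : F) : τCancellable (swapAB y) = σCancellable y := by
  rw [τCancellable, swapAB_swapAB]

lemma totalCancellable_nonneg (y : F) : 0 ≤ totalCancellable y :=
  add_nonneg (τCancellable_nonneg y) (σCancellable_nonneg y)

lemma totalCancellable_swapAB (y : F) : totalCancellable (swapAB y) = totalCancellable y := by
  rw [totalCancellable, totalCancellable, τCancellable_swapAB, τCancellable, add_comm]

lemma totalCancellable_le (y : F) : totalCancellable y ≤ aCount y + bCount y := by
  have := σCancellable_le_bCount (swapAB y)
  rw [bCount_swapAB] at this
  exact add_le_add this (σCancellable_le_bCount y)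

lemma σCancellable_σ_le (y : F) : σCancellable (σ y) ≤ σCancellable y := by
  linarith [two_mul_σCancellable_σ_le y, cancellation_σ_le y]

lemma cancellation_sub_cancellation_τ_le (y : F) :
    cancellation y - cancellation (τ y) ≤ 2 * τCancellable y := by
  have := two_mul_σCancellable_σ_le (swapAB y)
  rw [← swapAB_τ, cancellation_swapAB, cancellation_swapAB] at this
  have := σCancellable_nonneg (swapAB (τ y))
  unfold τCancellable
  linarith

lemma two_mul_τCancellable_σ_le (y : F) :
    2 * τCancellable (σ y) ≤ cancellation y - cancellation (τ y) := by
  simpa only [τCancellable, ← swapAB_σ, ← swapAB_τ, cancellation_swapAB] using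
    two_mul_σCancellable_τ_le (swapAB y)

lemma cancellation_τ_σ_eq {y : F} (hy : cancellation (σ y) = cancellation y) :
    cancellation (τ (σ y)) = cancellation (τ y) := by
  have := cancellation_σ_τ_eq (y := swapAB y)
  simp only [← swapAB_σ, ← swapAB_τ, cancellation_swapAB] at this
  exact this hy

lemma totalCancellable_σ_lt_or_isσStable (y : F) :
    totalCancellable (σ y) < totalCancellable y ∨ IsσStable y := by
  have τ_upper := two_mul_τCancellable_σ_le y
  have τ_lower := cancellation_sub_cancellation_τ_le y
  have σ_le := σCancellable_σ_le y
  rw [or_iff_not_imp_left, not_lt]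
  intro h
  unfold totalCancellable at h
  have σ_zero : σCancellable y = 0 := by
    by_contra hne
    linarith [σCancellable_σ_lt ((σCancellable_nonneg y).lt_of_ne' hne)]
  exact ⟨σ_zero, by linarith⟩

namespace IsσStable

variable {y : F}

lemma cancellation_σ (h : IsσStable y) : cancellation (σ y) = cancellation y := by
  have := two_mul_σCancellable_σ_le y
  have := σCancellable_nonneg (σ y)
  have := h.σCancellable_eq_zero
  linarith [cancellation_σ_le y]

lemma cancellation_τ_σ (h : IsσStable y) : cancellation (τ (σ y)) = cancellation (τ y) :=
  cancellation_τ_σ_eq h.cancellation_σ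

lemma apply_σ (h : IsσStable y) : IsσStable (σ y) where
  σCancellable_eq_zero :=
    ((σCancellable_σ_le y).trans h.σCancellable_eq_zero.le).antisymm (σCancellable_nonneg _)
  two_mul_τCancellable := by
    have := cancellation_sub_cancellation_τ_le (σ y)
    rw [h.cancellation_τ_σ, h.cancellation_σ] at *
    linarith [two_mul_τCancellable_σ_le y]

lemma totalCancellable_τ (h : IsσStable y) : totalCancellable (τ y) = 0 := by
  have τ_step := two_mul_σCancellable_σ_le (swapAB y)
  rw [← swapAB_τ, cancellation_swapAB, cancellation_swapAB] at τ_step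
  have σ_step := two_mul_σCancellable_τ_le y
  rw [h.cancellation_σ] at σ_step
  have := h.two_mul_τCancellable
  have := τCancellable_nonneg (τ y)
  have := σCancellable_nonneg (τ y)
  unfold totalCancellable τCancellable at *
  linarith

end IsσStable

lemma isσStable_of_totalCancellable_eq_zero {y : F} (h : totalCancellable y = 0) :
    IsσStable y := by
  rcases totalCancellable_σ_lt_or_isσStable y with hlt | hy
  · exact absurd (totalCancellable_nonneg (σ y)) (by lia)
  · exact hy

lemma isτStable_of_totalCancellable_eq_zero {y : F} (h : totalCancellable y = 0) : IsτStable y :=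
  isσStable_of_totalCancellable_eq_zero (by rwa [totalCancellable_swapAB])

lemma totalCancellable_τ_lt_or_isτStable (y : F) :
    totalCancellable (τ y) < totalCancellable y ∨ IsτStable y := by
  simpa only [IsτStable, ← swapAB_τ, totalCancellable_swapAB] using
    totalCancellable_σ_lt_or_isσStable (swapAB y)

namespace IsτStable

variable {y : F}

lemma apply_τ (h : IsτStable y) : IsτStable (τ y) := by
  rw [IsτStable, swapAB_τ]
  exact IsσStable.apply_σ h

lemma totalCancellable_σ (h : IsτStable y) : totalCancellable (σ y) = 0 := by
  rw [← totalCancellable_swapAB, swapAB_σ]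
  exact IsσStable.totalCancellable_τ h

lemma cancellation_τ (h : IsτStable y) : cancellation (τ y) = cancellation y := by
  simpa only [← swapAB_τ, cancellation_swapAB] using IsσStable.cancellation_σ h

end IsτStable

end Stability

section Growth

lemma natCast_cyclen (y : F) : (cyclen y : ℤ) = aCount y + bCount y := by
  rw [cyclen_eq, Nat.cast_add, aCount, bCount]

lemma cyclen_swapAB (y : F) : cyclen (swapAB y) = cyclen y := by
  rw [cyclen_eq, cyclen_eq, cyclicCount_swapAB_zero, cyclicCount_swapAB_one, add_comm]

/-- The increment of the cyclic length under `σ`. -/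
def σGrowth (y : F) : ℤ := aCount y - cancellation y

/-- The increment of the cyclic length under `τ`. -/
def τGrowth (y : F) : ℤ := bCount y - cancellation y

lemma σGrowth_swapAB (y : F) : σGrowth (swapAB y) = τGrowth y := by
  rw [σGrowth, aCount_swapAB, cancellation_swapAB, τGrowth]

lemma τGrowth_swapAB (y : F) : τGrowth (swapAB y) = σGrowth y := by
  rw [τGrowth, bCount_swapAB, cancellation_swapAB, σGrowth]

lemma natCast_cyclen_eq_growth (y : F) :
    (cyclen y : ℤ) = σGrowth y + τGrowth y + 2 * cancellation y := by
  rw [natCast_cyclen, σGrowth, τGrowth]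
  ring

lemma cyclen_σ (y : F) : (cyclen (σ y) : ℤ) = cyclen y + σGrowth y := by
  rw [natCast_cyclen, natCast_cyclen, aCount_σ, bCount_σ, σGrowth]
  ring

lemma cyclen_τ (y : F) : (cyclen (τ y) : ℤ) = cyclen y + τGrowth y := by
  rw [← cyclen_swapAB, swapAB_τ, cyclen_σ, σGrowth_swapAB, cyclen_swapAB]

lemma σGrowth_le_cyclen (y : F) : σGrowth y ≤ cyclen y := by
  rw [natCast_cyclen, σGrowth]
  linarith [bCount_nonneg y, cancellation_nonneg y]

lemma τGrowth_le_cyclen (y : F) : τGrowth y ≤ cyclen y := by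
  simpa only [σGrowth_swapAB, cyclen_swapAB] using σGrowth_le_cyclen (swapAB y)

lemma σGrowth_τ (y : F) : σGrowth (τ y) = σGrowth y + τGrowth (τ y) := by
  rw [σGrowth, σGrowth, τGrowth, aCount_τ, bCount_σ, bCount_τ]
  ring

lemma τGrowth_σ (y : F) : τGrowth (σ y) = τGrowth y + σGrowth (σ y) := by
  simpa only [← swapAB_σ, σGrowth_swapAB, τGrowth_swapAB] using σGrowth_τ (swapAB y)

namespace IsσStable

variable {y : F}

lemma σGrowth_nonneg (h : IsσStable y) : 0 ≤ σGrowth y := by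
  have := cancellation_le_aCount_add y
  rw [h.σCancellable_eq_zero] at this
  unfold σGrowth
  linarith

lemma σGrowth_σ (h : IsσStable y) : σGrowth (σ y) = σGrowth y := by
  rw [σGrowth, σGrowth, aCount_σ, h.cancellation_σ]

lemma cyclen_σ_pow (h : IsσStable y) (n : ℕ) :
    (cyclen ((σ ^ n) y) : ℤ) = cyclen y + n * σGrowth y := by
  induction n generalizing y with
  | zero => simp
  | succ n ih =>
    rw [pow_succ, MulAut.mul_apply, ih h.apply_σ, cyclen_σ, h.σGrowth_σ]
    push_cast
    ring

lemma τGrowth_τ_σ (h : IsσStable y) : τGrowth (τ (σ y)) = σGrowth y + τGrowth (τ y) := by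
  rw [τGrowth, τGrowth, σGrowth, bCount_τ, bCount_τ, bCount_σ, h.cancellation_τ_σ]
  ring

lemma cyclen_τ_σ (h : IsσStable y) :
    (cyclen (τ (σ y)) : ℤ) = cyclen (τ y) + 2 * σGrowth y := by
  have := τGrowth_σ y
  rw [h.σGrowth_σ] at this
  rw [cyclen_τ, cyclen_τ, cyclen_σ, this]
  ring

end IsσStable

namespace IsτStable

variable {y : F}

lemma τGrowth_nonneg (h : IsτStable y) : 0 ≤ τGrowth y := by
  rw [← σGrowth_swapAB]
  exact IsσStable.σGrowth_nonneg h

lemma τGrowth_τ (h : IsτStable y) : τGrowth (τ y) = τGrowth y := by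
  rw [τGrowth, τGrowth, bCount_τ, h.cancellation_τ]

lemma cyclen_τ_pow (h : IsτStable y) (n : ℕ) :
    (cyclen ((τ ^ n) y) : ℤ) = cyclen y + n * τGrowth y := by
  have swapAB_τ_pow : swapAB ((τ ^ n) y) = (σ ^ n) (swapAB y) :=
    DFunLike.congr_fun (SemiconjBy.pow_right swapAB_mul_τ n) y
  rw [← cyclen_swapAB, swapAB_τ_pow, IsσStable.cyclen_σ_pow h, cyclen_swapAB, σGrowth_swapAB]

end IsτStable

end Growth

section Words

/-- The automorphism `σ` (for `true`) or `τ` (for `false`). -/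
def generatorAut (x : Bool) : MulAut F := if x then σ else τ

/-- The product of the letters `σ` (for `true`) and `τ` (for `false`) of a word, the last of which
is applied first. -/
def wordAut (w : List Bool) : MulAut F := (w.map generatorAut).prod

@[simp] lemma wordAut_nil : wordAut [] = 1 := rfl

lemma wordAut_cons (x : Bool) (w : List Bool) : wordAut (x :: w) = generatorAut x * wordAut w :=
  List.prod_cons

lemma wordAut_append (w₁ w₂ : List Bool) : wordAut (w₁ ++ w₂) = wordAut w₁ * wordAut w₂ := by
  rw [wordAut, List.map_append, List.prod_append, wordAut, wordAut]

lemma swapAB_mul_generatorAut (x : Bool) :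
    swapAB * generatorAut x = generatorAut (!x) * swapAB := by
  cases x
  · exact swapAB_mul_τ
  · exact swapAB_mul_σ

lemma swapAB_mul_wordAut (w : List Bool) : swapAB * wordAut w = wordAut (w.map not) * swapAB := by
  induction w with
  | nil => rfl
  | cons x w ih => rw [wordAut_cons, ← mul_assoc, swapAB_mul_generatorAut, mul_assoc, ih,
      List.map_cons, wordAut_cons, mul_assoc]

/-- Stability under the letter `σ` (for `true`) or `τ` (for `false`). -/
def IsStableUnder (x : Bool) (y : F) : Prop := if x then IsσStable y else IsτStable y

namespace IsStableUnder

variable {x : Bool} {y : F}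

lemma of_totalCancellable_eq_zero (x : Bool) (h : totalCancellable y = 0) : IsStableUnder x y := by
  cases x
  · exact isτStable_of_totalCancellable_eq_zero h
  · exact isσStable_of_totalCancellable_eq_zero h

lemma apply_generatorAut (h : IsStableUnder x y) : IsStableUnder x (generatorAut x y) := by
  cases x
  · exact IsτStable.apply_τ h
  · exact IsσStable.apply_σ h

lemma totalCancellable_generatorAut_not (h : IsStableUnder x y) :
    totalCancellable (generatorAut (!x) y) = 0 := by
  cases x
  · exact IsτStable.totalCancellable_σ h
  · exact IsσStable.totalCancellable_τ h

end IsStableUnder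

lemma totalCancellable_generatorAut_lt_or_isStableUnder (x : Bool) (y : F) :
    totalCancellable (generatorAut x y) < totalCancellable y ∨ IsStableUnder x y := by
  cases x
  · exact totalCancellable_τ_lt_or_isτStable y
  · exact totalCancellable_σ_lt_or_isσStable y

lemma isStableUnder_wordAut_of_cyclen_le (x : Bool) {w : List Bool} {y : F}
    (h : cyclen y ≤ w.length) : IsStableUnder x (wordAut (x :: w) y) := by
  have stable_or_drop : ∀ x w, IsStableUnder x (wordAut (x :: w) y) ∨
      totalCancellable (wordAut (x :: w) y) + (x :: w).length ≤ cyclen y := by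
    intro x w
    induction w generalizing x with
    | nil =>
      rcases totalCancellable_generatorAut_lt_or_isStableUnder x y with drop | stable
      · right
        have := totalCancellable_le y
        rw [natCast_cyclen]
        simpa [wordAut_cons] using drop.trans_le this
      · exact Or.inl stable.apply_generatorAut
    | cons x' w ih =>
      rw [wordAut_cons x, MulAut.mul_apply]
      rcases ih x' with stable | drop'
      · left
        rcases Bool.eq_or_eq_not x x' with rfl | rfl
        · exact stable.apply_generatorAut
        · exact .of_totalCancellable_eq_zero _ stable.totalCancellable_generatorAut_not
      · rcases totalCancellable_generatorAut_lt_or_isStableUnder x (wordAut (x' :: w) y) with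
          drop | stable
        · right
          rw [List.length_cons]
          push_cast
          linarith
        · exact Or.inl stable.apply_generatorAut
  refine (stable_or_drop x w).resolve_right fun drop => ?_
  have := totalCancellable_nonneg (wordAut (x :: w) y)
  rw [List.length_cons] at drop
  lia

end Words

section Domination

/-- Comparison of two elements on which `σ` and `τ` no longer cancel anything new. It is inherited
by the images under `σ` and `τ`. -/
structure IsFreelyDominated (C : ℤ) (z z' : F) : Prop where
  left_eq_zero : totalCancellable z = 0
  right_eq_zero : totalCancellable z' = 0
  σGrowth_le : σGrowth z ≤ C * σGrowth z'
  τGrowth_le : τGrowth z ≤ C * τGrowth z'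
  cancellation_le : 2 * cancellation z ≤ C * cyclen z'

/-- Comparison of two `σ`-stable elements. It is inherited by the images under `σ`, and the images
under `τ` are freely dominated. -/
structure IsσDominated (C : ℤ) (z z' : F) : Prop where
  left_stable : IsσStable z
  right_stable : IsσStable z'
  σGrowth_le : σGrowth z ≤ C * σGrowth z'
  τGrowth_le : τGrowth (τ z) ≤ C * τGrowth (τ z')
  cancellation_le : 2 * cancellation (τ z) ≤ C * cyclen (τ z')
  cyclen_le : cyclen z ≤ C * cyclen z'

variable {C : ℤ} {z z' : F}

namespace IsFreelyDominated

lemma apply_σ (hC : 0 ≤ C) (h : IsFreelyDominated C z z') :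
    IsFreelyDominated C (σ z) (σ z') := by
  have stable := isσStable_of_totalCancellable_eq_zero h.left_eq_zero
  have stable' := isσStable_of_totalCancellable_eq_zero h.right_eq_zero
  refine ⟨(isτStable_of_totalCancellable_eq_zero h.left_eq_zero).totalCancellable_σ,
    (isτStable_of_totalCancellable_eq_zero h.right_eq_zero).totalCancellable_σ, ?_, ?_, ?_⟩
  · rw [stable.σGrowth_σ, stable'.σGrowth_σ]
    exact h.σGrowth_le
  · rw [τGrowth_σ, τGrowth_σ, stable.σGrowth_σ, stable'.σGrowth_σ, mul_add]
    exact add_le_add h.τGrowth_le h.σGrowth_le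
  · rw [stable.cancellation_σ, cyclen_σ, mul_add]
    exact le_add_of_le_of_nonneg h.cancellation_le (mul_nonneg hC stable'.σGrowth_nonneg)

lemma apply_τ (hC : 0 ≤ C) (h : IsFreelyDominated C z z') :
    IsFreelyDominated C (τ z) (τ z') := by
  have stable := isτStable_of_totalCancellable_eq_zero h.left_eq_zero
  have stable' := isτStable_of_totalCancellable_eq_zero h.right_eq_zero
  refine ⟨(isσStable_of_totalCancellable_eq_zero h.left_eq_zero).totalCancellable_τ,
    (isσStable_of_totalCancellable_eq_zero h.right_eq_zero).totalCancellable_τ, ?_, ?_, ?_⟩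
  · rw [σGrowth_τ, σGrowth_τ, stable.τGrowth_τ, stable'.τGrowth_τ, mul_add]
    exact add_le_add h.σGrowth_le h.τGrowth_le
  · rw [stable.τGrowth_τ, stable'.τGrowth_τ]
    exact h.τGrowth_le
  · rw [stable.cancellation_τ, cyclen_τ, mul_add]
    exact le_add_of_le_of_nonneg h.cancellation_le (mul_nonneg hC stable'.τGrowth_nonneg)

lemma cyclen_le (hC : 0 ≤ C) (h : IsFreelyDominated C z z') :
    (cyclen z : ℤ) ≤ 2 * C * cyclen z' := by
  have growth_le : σGrowth z' + τGrowth z' ≤ cyclen z' := by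
    rw [natCast_cyclen_eq_growth]
    linarith [cancellation_nonneg z']
  calc (cyclen z : ℤ) = σGrowth z + τGrowth z + 2 * cancellation z := natCast_cyclen_eq_growth z
    _ ≤ C * σGrowth z' + C * τGrowth z' + C * cyclen z' := by
      linarith [h.σGrowth_le, h.τGrowth_le, h.cancellation_le]
    _ = C * (σGrowth z' + τGrowth z') + C * cyclen z' := by ring
    _ ≤ C * cyclen z' + C * cyclen z' := by gcongr
    _ = 2 * C * cyclen z' := by ring

end IsFreelyDominated

namespace IsσDominated

lemma apply_σ (hC : 0 ≤ C) (h : IsσDominated C z z') : IsσDominated C (σ z) (σ z') := by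
  refine ⟨h.left_stable.apply_σ, h.right_stable.apply_σ, ?_, ?_, ?_, ?_⟩
  · rw [h.left_stable.σGrowth_σ, h.right_stable.σGrowth_σ]
    exact h.σGrowth_le
  · rw [h.left_stable.τGrowth_τ_σ, h.right_stable.τGrowth_τ_σ, mul_add]
    exact add_le_add h.σGrowth_le h.τGrowth_le
  · rw [h.left_stable.cancellation_τ_σ, h.right_stable.cyclen_τ_σ, mul_add]
    have := h.right_stable.σGrowth_nonneg
    exact le_add_of_le_of_nonneg h.cancellation_le (by positivity)
  · rw [cyclen_σ, cyclen_σ, mul_add]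
    exact add_le_add h.cyclen_le h.σGrowth_le

lemma apply_τ (h : IsσDominated C z z') : IsFreelyDominated C (τ z) (τ z') where
  left_eq_zero := h.left_stable.totalCancellable_τ
  right_eq_zero := h.right_stable.totalCancellable_τ
  σGrowth_le := by
    rw [σGrowth_τ, σGrowth_τ, mul_add]
    exact add_le_add h.σGrowth_le h.τGrowth_le
  τGrowth_le := h.τGrowth_le
  cancellation_le := h.cancellation_le

lemma apply_wordAut (hC : 0 ≤ C) (h : IsσDominated C z z') (w : List Bool) :
    IsσDominated C (wordAut w z) (wordAut w z') ∨
      IsFreelyDominated C (wordAut w z) (wordAut w z') := by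
  induction w with
  | nil => exact Or.inl h
  | cons x w ih =>
    rw [wordAut_cons, MulAut.mul_apply, MulAut.mul_apply]
    rcases ih with ih | ih <;> cases x
    · exact Or.inr ih.apply_τ
    · exact Or.inl (ih.apply_σ hC)
    · exact Or.inr (ih.apply_τ hC)
    · exact Or.inr (ih.apply_σ hC)

lemma cyclen_wordAut_le (hC : 0 ≤ C) (h : IsσDominated C z z') (w : List Bool) :
    (cyclen (wordAut w z) : ℤ) ≤ 2 * C * cyclen (wordAut w z') := by
  rcases h.apply_wordAut hC w with hw | hw
  · have : 0 ≤ C * cyclen (wordAut w z') := by positivity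
    linarith [hw.cyclen_le]
  · exact hw.cyclen_le hC

end IsσDominated

lemma cyclen_generatorAut_le (x : Bool) (y : F) : cyclen (generatorAut x y) ≤ 2 * cyclen y := by
  have σ_le := σGrowth_le_cyclen y
  have τ_le := τGrowth_le_cyclen y
  have σ_eq := cyclen_σ y
  have τ_eq := cyclen_τ y
  cases x <;> simp only [generatorAut, if_true, Bool.false_eq_true, if_false] <;> lia

lemma cyclen_wordAut_le (w : List Bool) (y : F) :
    cyclen (wordAut w y) ≤ 2 ^ w.length * cyclen y := by
  induction w with
  | nil => simp
  | cons x w ih =>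
    calc cyclen (wordAut (x :: w) y) ≤ 2 * cyclen (wordAut w y) := by
          rw [wordAut_cons]
          exact cyclen_generatorAut_le x _
      _ ≤ 2 * (2 ^ w.length * cyclen y) := by gcongr
      _ = 2 ^ (x :: w).length * cyclen y := by rw [List.length_cons]; ring

end Domination

section PositiveWords

/-- The hypothesis of the theorem on chains of type (C1), for words in `σ` and `τ`: an orbit of `u`
and the corresponding orbit of `v` stop growing at the `k`-th power of `σ` simultaneously, and so
for `τ`. -/
def StallTogether (n k : ℕ) (u v : F) : Prop := ∀ w : List Bool, w ≠ [] → w.length ≤ n →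
  (cyclen ((σ ^ (k + 1)) (wordAut w u)) = cyclen ((σ ^ k) (wordAut w u)) ↔
    cyclen ((σ ^ (k + 1)) (wordAut w v)) = cyclen ((σ ^ k) (wordAut w v))) ∧
  (cyclen ((τ ^ (k + 1)) (wordAut w u)) = cyclen ((τ ^ k) (wordAut w u)) ↔
    cyclen ((τ ^ (k + 1)) (wordAut w v)) = cyclen ((τ ^ k) (wordAut w v)))

namespace StallTogether

variable {n k : ℕ} {u v : F}

lemma symm (h : StallTogether n k u v) : StallTogether n k v u :=
  fun w hw hn => ⟨(h w hw hn).1.symm, (h w hw hn).2.symm⟩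

lemma apply_swapAB (h : StallTogether n k u v) : StallTogether n k (swapAB u) (swapAB v) := by
  have wordAut_swapAB (w : List Bool) (y : F) :
      wordAut w (swapAB y) = swapAB (wordAut (w.map not) y) := by
    simpa [Function.comp_def] using (DFunLike.congr_fun (swapAB_mul_wordAut (w.map not)) y).symm
  have σ_pow_swapAB (m : ℕ) (y : F) :
      (σ ^ m) (swapAB y) = swapAB ((τ ^ m) y) :=
    (DFunLike.congr_fun (SemiconjBy.pow_right swapAB_mul_τ m) y).symm
  have τ_pow_swapAB (m : ℕ) (y : F) :
      (τ ^ m) (swapAB y) = swapAB ((σ ^ m) y) :=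
    (DFunLike.congr_fun (SemiconjBy.pow_right swapAB_mul_σ m) y).symm
  intro w hw hn
  simp only [wordAut_swapAB, σ_pow_swapAB, τ_pow_swapAB, cyclen_swapAB]
  exact (h (w.map not) (by simpa using hw) (by simpa using hn)).symm

end StallTogether

lemma IsσStable.cyclen_σ_pow_succ_eq_iff {y : F} (h : IsσStable y) (k : ℕ) :
    cyclen ((σ ^ (k + 1)) y) = cyclen ((σ ^ k) y) ↔ σGrowth y = 0 := by
  rw [← Nat.cast_inj (R := ℤ), h.cyclen_σ_pow, h.cyclen_σ_pow]
  push_cast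
  constructor <;> intro <;> linarith

lemma IsτStable.cyclen_τ_pow_succ_eq_iff {y : F} (h : IsτStable y) (k : ℕ) :
    cyclen ((τ ^ (k + 1)) y) = cyclen ((τ ^ k) y) ↔ τGrowth y = 0 := by
  rw [← Nat.cast_inj (R := ℤ), h.cyclen_τ_pow, h.cyclen_τ_pow]
  push_cast
  constructor <;> intro <;> linarith

lemma le_mul_of_eq_zero_imp {a b C : ℤ} (hb : 0 ≤ b) (h : b = 0 → a = 0) (ha : a ≤ C)
    (hC : 0 ≤ C) : a ≤ C * b := by
  rcases hb.eq_or_lt with rfl | hb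
  · rw [h rfl, mul_zero]
  · exact ha.trans (le_mul_of_one_le_right hC hb)

lemma cyclen_apply_pos {y : F} (h : y ≠ 1) (φ : MulAut F) : 0 < cyclen (φ y) :=
  cyclen_pos (by simpa using h)

lemma two_mul_cancellation_le_cyclen {y : F} (h : totalCancellable y = 0) :
    2 * cancellation y ≤ cyclen y := by
  have := (isσStable_of_totalCancellable_eq_zero h).σGrowth_nonneg
  have := (isτStable_of_totalCancellable_eq_zero h).τGrowth_nonneg
  rw [natCast_cyclen_eq_growth]
  linarith

lemma IsσStable.isσDominated {C : ℤ} {z z' : F} (h : IsσStable z) (h' : IsσStable z')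
    (hz' : z' ≠ 1) (σ_zero : σGrowth z' = 0 → σGrowth z = 0)
    (τ_zero : τGrowth (τ z') = 0 → τGrowth (τ z) = 0)
    (hC : cyclen z ≤ C) (τ_hC : cyclen (τ z) ≤ C) : IsσDominated C z z' := by
  have C_nonneg : 0 ≤ C := (Nat.cast_nonneg _).trans hC
  have stable' := isτStable_of_totalCancellable_eq_zero h'.totalCancellable_τ
  have le_mul_cyclen {a : ℤ} (φ : MulAut F) (ha : a ≤ C) : a ≤ C * cyclen (φ z') :=
    ha.trans (le_mul_of_one_le_right C_nonneg (mod_cast cyclen_apply_pos hz' φ))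
  exact
    { left_stable := h
      right_stable := h'
      σGrowth_le := le_mul_of_eq_zero_imp h'.σGrowth_nonneg σ_zero
        ((σGrowth_le_cyclen z).trans hC) C_nonneg
      τGrowth_le := le_mul_of_eq_zero_imp stable'.τGrowth_nonneg τ_zero
        ((τGrowth_le_cyclen _).trans τ_hC) C_nonneg
      cancellation_le := le_mul_cyclen τ
        ((two_mul_cancellation_le_cyclen h.totalCancellable_τ).trans τ_hC)
      cyclen_le := le_mul_cyclen 1 hC }

namespace StallTogether

variable {L k : ℕ} {u v : F}

lemma isσDominated (h : StallTogether (L + 2) k u v) (hv : v ≠ 1) (hu_le : cyclen u ≤ L)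
    (hv_le : cyclen v ≤ L) {w : List Bool} (hw : w.length = L) :
    IsσDominated (2 ^ (L + 2) * L) (wordAut (true :: w) u) (wordAut (true :: w) v) := by
  have stable : IsσStable (wordAut (true :: w) u) :=
    isStableUnder_wordAut_of_cyclen_le true (hu_le.trans hw.ge)
  have stable' : IsσStable (wordAut (true :: w) v) :=
    isStableUnder_wordAut_of_cyclen_le true (hv_le.trans hw.ge)
  have τ_stable : IsτStable (wordAut (false :: true :: w) u) :=
    isτStable_of_totalCancellable_eq_zero stable.totalCancellable_τ
  have τ_stable' : IsτStable (wordAut (false :: true :: w) v) :=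
    isτStable_of_totalCancellable_eq_zero stable'.totalCancellable_τ
  have cyclen_le (w' : List Bool) (hw' : w'.length ≤ L + 2) :
      (cyclen (wordAut w' u) : ℤ) ≤ 2 ^ (L + 2) * L := by
    have : cyclen (wordAut w' u) ≤ 2 ^ (L + 2) * L :=
      (cyclen_wordAut_le w' u).trans (by gcongr; norm_num)
    exact_mod_cast this
  have σ_stall := (h (true :: w) (by simp) (by simp [hw])).1
  rw [stable.cyclen_σ_pow_succ_eq_iff, stable'.cyclen_σ_pow_succ_eq_iff] at σ_stall
  have τ_stall := (h (false :: true :: w) (by simp) (by simp [hw])).2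
  rw [τ_stable.cyclen_τ_pow_succ_eq_iff, τ_stable'.cyclen_τ_pow_succ_eq_iff] at τ_stall
  exact stable.isσDominated stable' (by simpa using hv) σ_stall.2 τ_stall.2
    (cyclen_le (true :: w) (by simp [hw])) (cyclen_le (false :: true :: w) (by simp [hw]))

lemma cyclen_wordAut_append_le (h : StallTogether (L + 2) k u v) (hv : v ≠ 1)
    (hu_le : cyclen u ≤ L) (hv_le : cyclen v ≤ L) {w : List Bool} (hw : w.length = L) (x : Bool)
    (w' : List Bool) :
    (cyclen (wordAut (w' ++ x :: w) u) : ℤ) ≤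
      2 * (2 ^ (L + 2) * L) * cyclen (wordAut (w' ++ x :: w) v) := by
  cases x with
  | true =>
    rw [wordAut_append]
    exact (h.isσDominated hv hu_le hv_le hw).cyclen_wordAut_le (by positivity) w'
  | false =>
    have cyclen_flip (y : F) : cyclen (wordAut (w' ++ false :: w) y) =
        cyclen (wordAut (w'.map not) (wordAut (true :: w.map not) (swapAB y))) := by
      rw [← cyclen_swapAB, ← MulAut.mul_apply, swapAB_mul_wordAut, List.map_append,
        wordAut_append]
      rfl
    rw [cyclen_flip, cyclen_flip]
    exact (h.apply_swapAB.isσDominated (by simpa using hv) (by rwa [cyclen_swapAB])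
      (by rwa [cyclen_swapAB]) (by simpa using hw)).cyclen_wordAut_le (by positivity) _

theorem cyclen_wordAut_le_mul (h : StallTogether (L + 2) k u v) (hv : v ≠ 1)
    (hu_le : cyclen u ≤ L) (hv_le : cyclen v ≤ L) (w : List Bool) :
    cyclen (wordAut w u) ≤ 2 * (2 ^ (L + 2) * L) * cyclen (wordAut w v) := by
  rcases le_or_gt w.length L with short | long
  · calc cyclen (wordAut w u) ≤ 2 ^ w.length * cyclen u := cyclen_wordAut_le w u
      _ ≤ 2 ^ (L + 2) * L := by gcongr <;> lia
      _ ≤ 2 * (2 ^ (L + 2) * L) := Nat.le_mul_of_pos_left _ two_pos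
      _ ≤ 2 * (2 ^ (L + 2) * L) * cyclen (wordAut w v) :=
        Nat.le_mul_of_pos_right _ (cyclen_apply_pos hv _)
  · obtain ⟨x, w₀, hw₀⟩ := List.exists_cons_of_length_pos
      (l := w.drop (w.length - (L + 1))) (by rw [List.length_drop]; lia)
    have w₀_length : w₀.length = L := by
      have := congrArg List.length hw₀
      rw [List.length_drop, List.length_cons] at this
      lia
    rw [← List.take_append_drop (w.length - (L + 1)) w, hw₀]
    exact_mod_cast h.cyclen_wordAut_append_le hv hu_le hv_le w₀_length x _

end StallTogether

end PositiveWords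

section CommonPrefix

variable {α : Type*} [DecidableEq α]

/-- The length of the longest common prefix of two lists. -/
def commonPrefixLength : List α → List α → ℕ
  | a :: l, b :: m => if a = b then commonPrefixLength l m + 1 else 0
  | _, _ => 0

lemma commonPrefixLength_append (k l m : List α) :
    commonPrefixLength (k ++ l) (k ++ m) = k.length + commonPrefixLength l m := by
  induction k with
  | nil => simp
  | cons a k ih => simp [commonPrefixLength, ih, add_right_comm]

lemma exists_append_commonPrefixLength (l m : List α) : ∃ k l' m', l = k ++ l' ∧ m = k ++ m' ∧
    k.length = commonPrefixLength l m ∧ ∀ a ∈ l'.head?, a ∉ m'.head? := by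
  induction l generalizing m with
  | nil => exact ⟨[], [], m, rfl, rfl, rfl, by simp⟩
  | cons a l ih =>
    cases m with
    | nil => exact ⟨[], a :: l, [], rfl, rfl, rfl, by simp⟩
    | cons b m =>
      by_cases hab : a = b
      · subst hab
        obtain ⟨k, l', m', rfl, rfl, hk, hne⟩ := ih m
        exact ⟨a :: k, l', m', rfl, rfl, by simp [commonPrefixLength, hk], hne⟩
      · exact ⟨[], _, _, rfl, rfl, by simp [commonPrefixLength, hab], by simpa using Ne.symm hab⟩

lemma le_commonPrefixLength_iff {n : ℕ} {l m : List α} :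
    n ≤ commonPrefixLength l m ↔ ∃ k, k.length = n ∧ k <+: l ∧ k <+: m := by
  constructor
  · intro h
    obtain ⟨k, l', m', hl, hm, hk, -⟩ := exists_append_commonPrefixLength l m
    have take_prefix : k.take n <+: k := k.take_prefix n
    exact ⟨k.take n, by simpa [hk] using h, take_prefix.trans ⟨l', hl.symm⟩,
      take_prefix.trans ⟨m', hm.symm⟩⟩
  · rintro ⟨k, rfl, ⟨l', rfl⟩, ⟨m', rfl⟩⟩
    rw [commonPrefixLength_append]
    exact Nat.le_add_right _ _

end CommonPrefix

section GromovProduct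

open FreeGroup hiding map_mul map_inv map_one

variable {α : Type*} [DecidableEq α]

/-- The Gromov product of `x` and `y` at the identity in the Cayley tree of the free group: the
length of the longest common prefix of their reduced words. -/
def gromovProduct (x y : FreeGroup α) : ℕ := commonPrefixLength x.toWord y.toWord

lemma le_gromovProduct_symm {n : ℕ} {x y : FreeGroup α} (h : n ≤ gromovProduct x y) :
    n ≤ gromovProduct y x := by
  obtain ⟨p, hp, hx, hy⟩ := le_commonPrefixLength_iff.1 h
  exact le_commonPrefixLength_iff.2 ⟨p, hp, hy, hx⟩

lemma gromovProduct_comm (x y : FreeGroup α) : gromovProduct x y = gromovProduct y x :=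
  (le_gromovProduct_symm le_rfl).antisymm (le_gromovProduct_symm le_rfl)

lemma le_gromovProduct_trans {n : ℕ} {x y z : FreeGroup α} (hxy : n ≤ gromovProduct x y)
    (hyz : n ≤ gromovProduct y z) : n ≤ gromovProduct x z := by
  obtain ⟨p, rfl, hpx, hpy⟩ := le_commonPrefixLength_iff.1 hxy
  obtain ⟨q, hq, hqy, hqz⟩ := le_commonPrefixLength_iff.1 hyz
  obtain rfl : q = p := (List.prefix_of_prefix_length_le hqy hpy hq.le).eq_of_length hq
  exact le_commonPrefixLength_iff.2 ⟨q, rfl, hpx, hqz⟩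

lemma gromovProduct_self (x : FreeGroup α) : gromovProduct x x = x.norm := by
  simpa [gromovProduct, FreeGroup.norm, commonPrefixLength] using
    commonPrefixLength_append x.toWord [] []

lemma gromovProduct_le_norm_left (x y : FreeGroup α) : gromovProduct x y ≤ x.norm := by
  obtain ⟨p, hp, hpx, -⟩ := le_commonPrefixLength_iff.1 (le_refl (gromovProduct x y))
  exact hp ▸ hpx.length_le

lemma exists_norm_eq_le_gromovProduct {n : ℕ} {x : FreeGroup α} (h : n ≤ x.norm) :
    ∃ p, p.norm = n ∧ n ≤ gromovProduct p x := by
  have take_reduced : FreeGroup.IsReduced (x.toWord.take n) :=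
    isReduced_toWord.infix (x.toWord.take_prefix n).isInfix
  have toWord_mk_take : (mk (x.toWord.take n)).toWord = x.toWord.take n := by
    rw [toWord_mk, take_reduced.reduce_eq]
  have length_take : (x.toWord.take n).length = n := List.length_take_of_le h
  exact ⟨mk (x.toWord.take n), by rw [FreeGroup.norm, toWord_mk_take, length_take],
    le_commonPrefixLength_iff.2
      ⟨x.toWord.take n, length_take, by rw [toWord_mk_take], x.toWord.take_prefix n⟩⟩

lemma isReduced_invRev_append {α : Type*} {l m : List (α × Bool)} (hl : FreeGroup.IsReduced l)
    (hm : FreeGroup.IsReduced m) (h : ∀ a ∈ l.head?, a ∉ m.head?) :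
    FreeGroup.IsReduced (invRev l ++ m) := by
  classical
  refine List.isChain_append.2 ⟨?_, hm, fun a ha b hb hab => ?_⟩
  · rw [← hl.reduce_eq, ← reduce_invRev]
    exact IsReduced.of_reduce_eq reduce.idem
  · cases l with
    | nil => simp [invRev] at ha
    | cons c l =>
      obtain rfl : (c.1, !c.2) = a := by simpa [invRev] using ha
      by_contra hne
      exact h c rfl (by rwa [show c = b from Prod.ext hab (by simpa using hne)])

lemma exists_toWord_mul (x y : FreeGroup α) : ∃ k l m, x.toWord = l ++ invRev k ∧
    y.toWord = k ++ m ∧ (x * y).toWord = l ++ m ∧ k.length = gromovProduct x⁻¹ y := by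
  obtain ⟨k, l, m, hl, hm, hk, hne⟩ := exists_append_commonPrefixLength x⁻¹.toWord y.toWord
  have hx : x.toWord = invRev l ++ invRev k := by
    rw [← invRev_append, ← hl, toWord_inv, invRev_invRev]
  have l_reduced : FreeGroup.IsReduced l :=
    isReduced_toWord.infix (List.IsSuffix.isInfix ⟨k, hl.symm⟩)
  have m_reduced : FreeGroup.IsReduced m :=
    isReduced_toWord.infix (List.IsSuffix.isInfix ⟨k, hm.symm⟩)
  refine ⟨k, invRev l, m, hx, hm, ?_, hk⟩
  have mul_eq : x * y = mk (invRev l ++ m) := by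
    rw [← mk_toWord (x := x), ← mk_toWord (x := y), hx, hm, ← mul_mk, ← mul_mk, ← mul_mk,
      ← inv_mk (L := k)]
    group
  rw [mul_eq, toWord_mk, (isReduced_invRev_append l_reduced m_reduced hne).reduce_eq]

lemma norm_mul_add_gromovProduct (x y : FreeGroup α) :
    (x * y).norm + 2 * gromovProduct x⁻¹ y = x.norm + y.norm := by
  obtain ⟨k, l, m, hx, hy, hxy, hk⟩ := exists_toWord_mul x y
  rw [FreeGroup.norm, FreeGroup.norm, FreeGroup.norm, hx, hy, hxy, ← hk]
  simp only [List.length_append, invRev_length]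
  ring

lemma norm_le_gromovProduct_mul_add (x y : FreeGroup α) :
    x.norm ≤ gromovProduct (x * y) x + gromovProduct x⁻¹ y := by
  obtain ⟨k, l, m, hx, _, hxy, hk⟩ := exists_toWord_mul x y
  rw [gromovProduct, FreeGroup.norm, hx, hxy, commonPrefixLength_append, ← hk, List.length_append,
    invRev_length]
  lia

lemma norm_lt_norm_mul_self {x : FreeGroup α} (hx : x ≠ 1) : x.norm < (x * x).norm := by
  have norm_pow (n : ℕ) : (x ^ (n + 1)).norm =
      2 * (reduceCyclically.conjugator x.toWord).length +
        (n + 1) * (reduceCyclically x.toWord).length := by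
    rw [FreeGroup.norm, toWord_pow, reduceCyclically.reduce_flatten_replicate_succ isReduced_toWord]
    simp only [List.length_append, invRev_length, List.length_flatten, List.map_replicate,
      List.sum_replicate, smul_eq_mul]
    ring
  have core_pos : 0 < (reduceCyclically x.toWord).length := by
    rw [List.length_pos_iff]
    intro core_nil
    have := eq_conj_mk_reduceCyclically x
    rw [core_nil, ← one_eq_mk, mul_one, mul_inv_cancel] at this
    exact hx this
  have norm_one := norm_pow 0
  have norm_two := norm_pow 1
  rw [zero_add, pow_one] at norm_one
  rw [one_add_one_eq_two, pow_two] at norm_two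
  lia

lemma two_mul_gromovProduct_inv_lt {x : FreeGroup α} (hx : x ≠ 1) :
    2 * gromovProduct x x⁻¹ < x.norm := by
  have := norm_mul_add_gromovProduct x x
  have := norm_lt_norm_mul_self hx
  rw [gromovProduct_comm]
  lia

lemma norm_inv_mul_le {n : ℕ} {p x : FreeGroup α} (hp : p.norm = n) (h : n ≤ gromovProduct p x) :
    (p⁻¹ * x).norm + n ≤ x.norm := by
  have := norm_mul_add_gromovProduct p⁻¹ x
  rw [inv_inv, norm_inv_eq] at this
  lia

lemma norm_le_gromovProduct_inv_mul_add (p x : FreeGroup α) :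
    x.norm ≤ gromovProduct (x⁻¹ * p) x⁻¹ + p.norm := by
  have := norm_le_gromovProduct_mul_add x⁻¹ p
  have := gromovProduct_le_norm_left p x
  rw [inv_inv, gromovProduct_comm x, norm_inv_eq] at *
  lia

end GromovProduct


section NielsenReduction

open FreeGroup hiding map_mul map_inv map_one

variable {α : Type*} [DecidableEq α] {x y : FreeGroup α}

-- The conjugator is the common prefix `p` of `x` and `y`: if `x = p q`, then `y` begins with `p`
-- and ends with `q`, so `p⁻¹ (y x⁻¹) p` is shorter than `y` by the length of `x`.
lemma exists_norm_conj_mul_inv_lt (hx : x ≠ 1) (hxy : x.norm ≤ y.norm)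
    (h : x.norm ≤ gromovProduct x y + gromovProduct x⁻¹ y⁻¹) :
    ∃ g, (g * x * g⁻¹).norm + (g * (y * x⁻¹) * g⁻¹).norm < x.norm + y.norm := by
  obtain ⟨p, hp, hpx⟩ := exists_norm_eq_le_gromovProduct (gromovProduct_le_norm_left x y)
  have hpy := le_gromovProduct_trans hpx le_rfl
  have p_le : p.norm ≤ x.norm := hp.le.trans (gromovProduct_le_norm_left x y)
  have suffix : x.norm - p.norm ≤ gromovProduct (y⁻¹ * p) (x⁻¹ * p) := by
    have left_le := norm_le_gromovProduct_inv_mul_add p x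
    have right_le := norm_le_gromovProduct_inv_mul_add p y
    exact le_gromovProduct_trans (y := y⁻¹) (by lia) <|
      le_gromovProduct_trans (y := x⁻¹) (le_gromovProduct_symm (by lia))
        (le_gromovProduct_symm (by lia))
  have norm_x := norm_inv_mul_le hp hpx
  have norm_y := norm_inv_mul_le hp hpy
  have norm_conj_x := FreeGroup.norm_mul_le (p⁻¹ * x) p
  have norm_conj_y := norm_mul_add_gromovProduct (p⁻¹ * y) (p⁻¹ * x)⁻¹
  rw [FreeGroup.norm_inv_eq, mul_inv_rev, mul_inv_rev, inv_inv] at norm_conj_y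
  have x_pos : x.norm ≠ 0 := by simpa using hx
  refine ⟨p⁻¹, ?_⟩
  rw [inv_inv, show p⁻¹ * (y * x⁻¹) * p = p⁻¹ * y * (x⁻¹ * p) by group]
  lia

lemma exists_norm_conj_lt (hx : 0 < gromovProduct x x⁻¹) (hxy : 0 < gromovProduct x y) :
    ∃ g, (g * x * g⁻¹).norm + (g * y * g⁻¹).norm < x.norm + y.norm := by
  have norm_x_pos : 1 ≤ x.norm := hxy.trans_le (gromovProduct_le_norm_left x y)
  have x_ne : x ≠ 1 := by
    rintro rfl
    simp at norm_x_pos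
  have two_lt := two_mul_gromovProduct_inv_lt x_ne
  obtain ⟨p, hp, hpx⟩ := exists_norm_eq_le_gromovProduct norm_x_pos
  have norm_x := norm_inv_mul_le hp hpx
  have norm_y := norm_inv_mul_le hp (le_gromovProduct_trans hpx hxy)
  have p_prefix : 1 ≤ gromovProduct (x⁻¹ * p) p := by
    have le_add := norm_le_gromovProduct_inv_mul_add p x
    exact le_gromovProduct_trans (y := x⁻¹) (by lia) <|
      le_gromovProduct_trans (le_gromovProduct_symm hx) (le_gromovProduct_symm hpx)
  have norm_conj_x := norm_mul_add_gromovProduct (p⁻¹ * x) p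
  rw [mul_inv_rev, inv_inv] at norm_conj_x
  have norm_conj_y := FreeGroup.norm_mul_le (p⁻¹ * y) p
  refine ⟨p⁻¹, ?_⟩
  rw [inv_inv]
  lia

/-- The images of the letters under a homomorphism of free groups retain a nonempty piece in any
reduced product. Inverse letters are written `(s.1, !s.2)`. -/
def IsNielsenReduced {β : Type*} (f : FreeGroup β →* FreeGroup α) : Prop :=
  ∀ s t r : β × Bool, t ≠ s → r ≠ (s.1, !s.2) →
    gromovProduct (f (mk [s])) (f (mk [t])) + gromovProduct (f (mk [s]))⁻¹ (f (mk [r])) <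
      (f (mk [s])).norm

lemma mk_singleton_not {β : Type*} (s : β × Bool) :
    (mk [(s.1, !s.2)] : FreeGroup β) = (mk [s])⁻¹ := rfl

namespace IsNielsenReduced

variable {β : Type*} {f : FreeGroup β →* FreeGroup α}

lemma gromovProduct_lt (h : IsNielsenReduced f) {w : List (β × Bool)} {s : β × Bool}
    (hw : FreeGroup.IsReduced (s :: w)) :
    (∀ t ≠ s, gromovProduct (f (mk [s])) (f (mk [t])) <
      gromovProduct (f (mk (s :: w))) (f (mk [s]))) ∧ (w ≠ [] → 1 < (f (mk (s :: w))).norm) := by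
  induction w generalizing s with
  | nil =>
    refine ⟨fun t hts => ?_, by simp⟩
    rw [gromovProduct_self]
    have := h s t s hts (by simp [Prod.ext_iff])
    lia
  | cons s' w ih =>
    obtain ⟨hss', hw'⟩ := List.isChain_cons_cons.1 hw
    obtain ⟨ih, -⟩ := ih hw'
    have s'_ne : s' ≠ (s.1, !s.2) := by
      rintro rfl
      simpa using hss' rfl
    have f_cons : f (mk (s :: s' :: w)) = f (mk [s]) * f (mk (s' :: w)) := by
      rw [← map_mul, mul_mk, List.singleton_append]
    have norm_mul := norm_mul_add_gromovProduct (f (mk [s])) (f (mk (s' :: w)))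
    have norm_le := norm_le_gromovProduct_mul_add (f (mk [s])) (f (mk (s' :: w)))
    have cancel_lt := ih _ s'_ne.symm
    rw [mk_singleton_not, map_inv] at cancel_lt
    have cancel_le : gromovProduct (f (mk [s]))⁻¹ (f (mk (s' :: w))) ≤
        gromovProduct (f (mk [s'])) (f (mk [s]))⁻¹ := by
      by_contra! hlt
      exact Nat.not_succ_le_self _
        (le_gromovProduct_symm (le_gromovProduct_trans (Nat.succ_le_of_lt hlt) cancel_lt))
    have prefix_le := gromovProduct_le_norm_left (f (mk (s' :: w))) (f (mk [s']))
    rw [f_cons]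
    have letter_lt (t : β × Bool) (hts : t ≠ s) := h s t s' hts s'_ne
    rw [gromovProduct_comm (f (mk [s']))] at *
    refine ⟨fun t hts => ?_, fun _ => ?_⟩
    · have := letter_lt t hts
      lia
    · have := letter_lt (s.1, !s.2) (by simp [Prod.ext_iff])
      lia

lemma norm_eq_one (h : IsNielsenReduced f) {x : FreeGroup β} [DecidableEq β]
    (hx : (f x).norm = 1) : x.norm = 1 := by
  have reduced := isReduced_toWord (x := x)
  rw [← mk_toWord (x := x)] at hx
  rw [FreeGroup.norm]
  cases hw : x.toWord with
  | nil => simp [hw, ← one_eq_mk] at hx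
  | cons s w =>
    rw [hw] at hx reduced
    have : w = [] := by
      by_contra hne
      exact ((h.gromovProduct_lt reduced).2 hne).ne' hx
    rw [this, List.length_singleton]

end IsNielsenReduced

end NielsenReduction

section NielsenGenerators

open FreeGroup hiding map_mul map_inv map_one

lemma exists_mem_closure_eq_letters {s t : Fin 2 × Bool} (h : t.1 ≠ s.1) :
    ∃ η ∈ Subgroup.closure {swapAB, invB}, η ga = mk [s] ∧ η gb = mk [t] := by
  have swapAB_mem : swapAB ∈ Subgroup.closure {swapAB, invB} :=
    Subgroup.subset_closure (by simp)
  have invB_mem : invB ∈ Subgroup.closure {swapAB, invB} :=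
    Subgroup.subset_closure (by simp)
  have invA_mem := mul_mem (mul_mem swapAB_mem invB_mem) swapAB_mem
  obtain ⟨i, e⟩ := s
  obtain ⟨j, e'⟩ := t
  fin_cases i <;> fin_cases j <;> cases e <;> cases e' <;> simp at h
  · exact ⟨_, mul_mem invA_mem invB_mem, by simp; rfl, by simp; rfl⟩
  · exact ⟨_, invA_mem, by simp; rfl, by simp; rfl⟩
  · exact ⟨_, invB_mem, by simp; rfl, by simp; rfl⟩
  · exact ⟨_, one_mem _, rfl, rfl⟩
  · exact ⟨_, mul_mem swapAB_mem (mul_mem invA_mem invB_mem), by simp; rfl, by simp; rfl⟩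
  · exact ⟨_, mul_mem swapAB_mem invA_mem, by simp; rfl, by simp; rfl⟩
  · exact ⟨_, mul_mem swapAB_mem invB_mem, by simp; rfl, by simp; rfl⟩
  · exact ⟨_, swapAB_mem, by simp; rfl, by simp; rfl⟩

lemma exists_eq_mk_singleton_of_norm_eq_one {α : Type*} [DecidableEq α] {x : FreeGroup α}
    (h : x.norm = 1) : ∃ s, x = mk [s] := by
  obtain ⟨s, hs⟩ := List.length_eq_one_iff.1 h
  exact ⟨s, by rw [← hs, mk_toWord]⟩

lemma mem_closure_of_norm_eq_one {φ : MulAut F} (ha : (φ ga).norm = 1) (hb : (φ gb).norm = 1) :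
    φ ∈ Subgroup.closure {swapAB, invB} := by
  obtain ⟨s, hs⟩ := exists_eq_mk_singleton_of_norm_eq_one ha
  obtain ⟨t, ht⟩ := exists_eq_mk_singleton_of_norm_eq_one hb
  have t_ne : t.1 ≠ s.1 := by
    intro hts
    have : φ gb = φ ga ∨ φ gb = φ ga⁻¹ := by
      rw [map_inv, hs, ht, ← mk_singleton_not]
      rcases Bool.eq_or_eq_not t.2 s.2 with h | h
      · exact Or.inl (by rw [Prod.ext hts h])
      · exact Or.inr (by rw [← hts, ← h])
    rw [φ.injective.eq_iff, φ.injective.eq_iff] at this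
    revert this
    decide
  obtain ⟨η, hη, η_ga, η_gb⟩ := exists_mem_closure_eq_letters t_ne
  rwa [mulAut_ext (hs.trans η_ga.symm) (ht.trans η_gb.symm)]

/-- The sum of the word lengths of the images of the two generators. -/
def totalNorm (φ : MulAut F) : ℕ := (φ ga).norm + (φ gb).norm

/-- `φ` has the least total norm in its coset `φH`. -/
def IsNormMinimal (H : Subgroup (MulAut F)) (φ : MulAut F) : Prop :=
  ∀ h ∈ H, totalNorm φ ≤ totalNorm (φ * h)

lemma exists_mul_isNormMinimal (H : Subgroup (MulAut F)) (φ : MulAut F) :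
    ∃ h ∈ H, IsNormMinimal H (φ * h) := by
  obtain ⟨h, hH, h_min⟩ := exists_minimalFor_of_wellFoundedLT (· ∈ H)
    (fun h => totalNorm (φ * h)) ⟨1, H.one_mem⟩
  refine ⟨h, hH, fun h' hH' => ?_⟩
  rw [mul_assoc]
  by_contra! hlt
  exact (h_min (H.mul_mem hH hH') hlt.le).not_gt hlt

lemma totalNorm_eq {φ : MulAut F} {s t : Fin 2 × Bool} (h : t.1 ≠ s.1) :
    (φ (mk [s])).norm + (φ (mk [t])).norm = totalNorm φ := by
  have norm_letter (i : Fin 2) (e : Bool) : (φ (mk [(i, e)])).norm = (φ (of i)).norm := by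
    cases e
    · exact (congrArg FreeGroup.norm (map_inv φ (of i))).trans FreeGroup.norm_inv_eq
    · rfl
  obtain ⟨i, e⟩ := s
  obtain ⟨j, e'⟩ := t
  rw [norm_letter, norm_letter]
  fin_cases i <;> fin_cases j
  · exact absurd rfl h
  · rfl
  · exact add_comm _ _
  · exact absurd rfl h

/-- The automorphisms that generate `MulAut F` by Nielsen's theorem. -/
def nielsenSubgroup : Subgroup (MulAut F) :=
  Subgroup.closure (Set.range MulAut.conj ∪ {swapAB, invB, τ})

lemma conj_mem_nielsenSubgroup (g : F) : MulAut.conj g ∈ nielsenSubgroup :=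
  Subgroup.subset_closure (Or.inl ⟨g, rfl⟩)

lemma τ_mem_nielsenSubgroup : τ ∈ nielsenSubgroup :=
  Subgroup.subset_closure (by simp)

lemma closure_le_nielsenSubgroup : Subgroup.closure {swapAB, invB} ≤ nielsenSubgroup :=
  Subgroup.closure_mono fun _ h => Or.inr (by rcases h with rfl | rfl <;> simp)

lemma two_mul_gromovProduct_letter_inv_lt (φ : MulAut F) (s : Fin 2 × Bool) :
    2 * gromovProduct (φ (mk [s])) (φ (mk [s]))⁻¹ < (φ (mk [s])).norm := by
  have letter_ne_one : mk [s] ≠ 1 := by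
    revert s
    decide
  exact two_mul_gromovProduct_inv_lt ((map_ne_one_iff φ φ.injective).2 letter_ne_one)

namespace IsNormMinimal

variable {φ : MulAut F}

lemma le_conj (h : IsNormMinimal nielsenSubgroup φ) {χ : MulAut F} (hχ : χ ∈ nielsenSubgroup)
    (g : F) : totalNorm φ ≤ (g * φ (χ ga) * g⁻¹).norm + (g * φ (χ gb) * g⁻¹).norm := by
  have := h (MulAut.conj (φ⁻¹ g) * χ) (mul_mem (conj_mem_nielsenSubgroup _) hχ)
  simpa [totalNorm, MulAut.conj_apply] using this

lemma exists_letters (h : IsNormMinimal nielsenSubgroup φ) {s t : Fin 2 × Bool}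
    (hst : t.1 ≠ s.1) : ∃ ψ, IsNormMinimal nielsenSubgroup ψ ∧ ψ ga = φ (mk [s]) ∧
      ψ gb = φ (mk [t]) := by
  obtain ⟨η, hη, η_ga, η_gb⟩ := exists_mem_closure_eq_letters hst
  refine ⟨φ * η, fun χ hχ => ?_, by rw [MulAut.mul_apply, η_ga], by rw [MulAut.mul_apply, η_gb]⟩
  have totalNorm_mul : totalNorm (φ * η) = totalNorm φ := by
    rw [totalNorm, MulAut.mul_apply, MulAut.mul_apply, η_ga, η_gb, totalNorm_eq hst]
  rw [totalNorm_mul, mul_assoc]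
  exact h _ (mul_mem (closure_le_nielsenSubgroup hη) hχ)

lemma gromovProduct_inv_eq_zero (h : IsNormMinimal nielsenSubgroup φ) {s t : Fin 2 × Bool}
    (hst : t.1 ≠ s.1) : gromovProduct (φ (mk [s])) (φ (mk [s]))⁻¹ = 0 ∨
      gromovProduct (φ (mk [s])) (φ (mk [t])) = 0 := by
  by_contra! hpos
  obtain ⟨g, hg⟩ := exists_norm_conj_lt (Nat.pos_of_ne_zero hpos.1) (Nat.pos_of_ne_zero hpos.2)
  obtain ⟨ψ, ψ_min, ψ_ga, ψ_gb⟩ := h.exists_letters hst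
  rw [← ψ_ga, ← ψ_gb] at hg
  exact (ψ_min.le_conj (one_mem _) g).not_gt hg

lemma gromovProduct_add_lt (h : IsNormMinimal nielsenSubgroup φ) {s t : Fin 2 × Bool}
    (hst : t.1 ≠ s.1) : gromovProduct (φ (mk [s])) (φ (mk [t])) +
      gromovProduct (φ (mk [s]))⁻¹ (φ (mk [t]))⁻¹ < (φ (mk [s])).norm := by
  have of_norm_le {s t : Fin 2 × Bool} (hst : t.1 ≠ s.1)
      (hle : (φ (mk [s])).norm ≤ (φ (mk [t])).norm) :
      gromovProduct (φ (mk [s])) (φ (mk [t])) +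
        gromovProduct (φ (mk [s]))⁻¹ (φ (mk [t]))⁻¹ < (φ (mk [s])).norm := by
    by_contra! hge
    obtain ⟨ψ, ψ_min, ψ_ga, ψ_gb⟩ := h.exists_letters hst
    rw [← ψ_ga, ← ψ_gb] at hle hge
    obtain ⟨g, hg⟩ := exists_norm_conj_mul_inv_lt (by simp [ga]) hle hge
    have τ_inv_ga : τ⁻¹ ga = ga := by rw [MulAut.inv_apply, MulEquiv.symm_apply_eq]; simp
    have τ_inv_gb : τ⁻¹ gb = gb * ga⁻¹ := by rw [MulAut.inv_apply, MulEquiv.symm_apply_eq]; simp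
    have := ψ_min.le_conj (inv_mem τ_mem_nielsenSubgroup) g
    rw [τ_inv_ga, τ_inv_gb, map_mul, map_inv] at this
    exact this.not_gt hg
  rcases le_total (φ (mk [s])).norm (φ (mk [t])).norm with hle | hle
  · exact of_norm_le hst hle
  · rw [gromovProduct_comm, gromovProduct_comm (φ (mk [s]))⁻¹]
    exact (of_norm_le hst.symm hle).trans_le hle

lemma gromovProduct_inv_add_lt (h : IsNormMinimal nielsenSubgroup φ) {s t : Fin 2 × Bool}
    (hst : t.1 ≠ s.1) : gromovProduct (φ (mk [s])) (φ (mk [s]))⁻¹ +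
      gromovProduct (φ (mk [s])) (φ (mk [t])) < (φ (mk [s])).norm := by
  rcases h.gromovProduct_inv_eq_zero hst with h0 | h0
  · have := h.gromovProduct_add_lt hst
    lia
  · have := two_mul_gromovProduct_letter_inv_lt φ s
    lia

lemma gromovProduct_add_inv_left_lt (h : IsNormMinimal nielsenSubgroup φ) {s t : Fin 2 × Bool}
    (hst : t.1 ≠ s.1) : gromovProduct (φ (mk [s])) (φ (mk [t])) +
      gromovProduct (φ (mk [s]))⁻¹ (φ (mk [t])) < (φ (mk [s])).norm := by
  have add_lt := h.gromovProduct_add_lt hst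
  have add_lt' := h.gromovProduct_add_lt (s := s) (t := (t.1, !t.2)) hst
  rw [mk_singleton_not, map_inv, inv_inv] at add_lt'
  by_cases hpos : 1 ≤ gromovProduct (φ (mk [s])) (φ (mk [t])) ∧
      1 ≤ gromovProduct (φ (mk [s]))⁻¹ (φ (mk [t]))
  · have := le_gromovProduct_trans hpos.1 (le_gromovProduct_symm hpos.2)
    have := h.gromovProduct_inv_eq_zero hst
    lia
  · lia

lemma isNielsenReduced (h : IsNormMinimal nielsenSubgroup φ) :
    IsNielsenReduced φ.toMonoidHom := by
  have eq_or_fst_ne {s t : Fin 2 × Bool} (hts : t ≠ s) : t = (s.1, !s.2) ∨ t.1 ≠ s.1 := by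
    revert s t
    decide
  have eq_or_eq {s t r : Fin 2 × Bool} (hts : t.1 ≠ s.1) (hrs : r.1 ≠ s.1) :
      r = t ∨ r = (t.1, !t.2) := by
    revert s t r
    decide
  intro s t r hts hrs
  change gromovProduct (φ (mk [s])) (φ (mk [t])) + gromovProduct (φ (mk [s]))⁻¹ (φ (mk [r])) <
    (φ (mk [s])).norm
  have map_not (s : Fin 2 × Bool) : φ (mk [(s.1, !s.2)]) = (φ (mk [s]))⁻¹ := by
    rw [mk_singleton_not, map_inv]
  rcases eq_or_fst_ne hts with rfl | hts <;> rcases eq_or_fst_ne hrs with hr | hrs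
  · obtain rfl : r = s := by simpa using hr
    have := two_mul_gromovProduct_letter_inv_lt φ r
    rw [map_not, gromovProduct_comm (φ (mk [r]))⁻¹]
    lia
  · have := h.gromovProduct_inv_add_lt (s := (s.1, !s.2)) hrs
    rw [map_not, inv_inv, FreeGroup.norm_inv_eq] at this
    rwa [map_not, gromovProduct_comm (φ (mk [s]))]
  · obtain rfl : r = s := by simpa using hr
    rw [add_comm, gromovProduct_comm _ (φ (mk [r]))]
    exact h.gromovProduct_inv_add_lt hts
  · rcases eq_or_eq hts hrs with rfl | rfl
    · exact h.gromovProduct_add_inv_left_lt hts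
    · rw [map_not]
      exact h.gromovProduct_add_lt hts

end IsNormMinimal

theorem nielsenSubgroup_eq_top : nielsenSubgroup = ⊤ := by
  refine (Subgroup.eq_top_iff' _).2 fun φ => ?_
  obtain ⟨h, hH, h_min⟩ := exists_mul_isNormMinimal nielsenSubgroup φ
  have norm_inv_eq_one {y : F} (hy : y.norm = 1) : ((φ * h)⁻¹ y).norm = 1 :=
    h_min.isNielsenReduced.norm_eq_one
      (by simpa only [MulEquiv.coe_toMonoidHom, MulAut.apply_inv_self] using hy)
  have inv_mem_closure : (φ * h)⁻¹ ∈ Subgroup.closure {swapAB, invB} :=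
    mem_closure_of_norm_eq_one (norm_inv_eq_one (norm_of 0)) (norm_inv_eq_one (norm_of 1))
  rw [← mul_mem_cancel_right hH, ← inv_mem_iff]
  exact closure_le_nielsenSubgroup inv_mem_closure

end NielsenGenerators

section NormalForm

lemma cyclen_invB (y : F) : cyclen (invB y) = cyclen y := by
  rw [cyclen_eq, cyclen_eq, cyclicCount_invB, cyclicCount_invB]

lemma cyclen_invAB (y : F) : cyclen (invAB y) = cyclen y := by
  rw [cyclen_eq, cyclen_eq, cyclicCount_invAB, cyclicCount_invAB]

lemma outerEq_wordAut_mul_invAB (w : List Bool) :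
    OuterEq (wordAut w * invAB) (invAB * wordAut w) := by
  induction w with
  | nil => exact .refl _
  | cons x w ih =>
    have outerEq_generatorAut : OuterEq (generatorAut x * invAB) (invAB * generatorAut x) := by
      cases x
      · exact outerEq_τ_mul_invAB
      · exact outerEq_σ_mul_invAB
    have left := (OuterEq.refl (generatorAut x)).mul ih
    have right := outerEq_generatorAut.mul (.refl (wordAut w))
    rw [← mul_assoc] at left
    rw [wordAut_cons, mul_assoc]
    simpa only [mul_assoc] using left.trans right

/-- The automorphisms `φ` and `ψ` change cyclic lengths in the same way. -/
def SameCyclen (φ ψ : MulAut F) : Prop := ∀ y, cyclen (φ y) = cyclen (ψ y)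

lemma SameCyclen.mul_right {φ ψ : MulAut F} (h : SameCyclen φ ψ) (χ : MulAut F) :
    SameCyclen (φ * χ) (ψ * χ) :=
  fun y => h (χ y)

/-- Up to cyclic lengths, `φ` is a positive word in `σ` and `τ`, possibly preceded by `b ↦ b⁻¹`. -/
def HasPositiveForm (φ : MulAut F) : Prop :=
  ∃ w, SameCyclen φ (wordAut w) ∨ SameCyclen φ (wordAut w * invB)

namespace HasPositiveForm

variable {φ ψ χ : MulAut F}

lemma of_sameCyclen (h : SameCyclen φ ψ) (hψ : HasPositiveForm ψ) : HasPositiveForm φ := by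
  obtain ⟨w, hw⟩ := hψ
  exact ⟨w, hw.imp (fun hw y => (h y).trans (hw y)) fun hw y => (h y).trans (hw y)⟩

lemma mul_right (hφ : HasPositiveForm φ) (h : ∀ w, HasPositiveForm (wordAut w * χ))
    (h' : ∀ w, HasPositiveForm (wordAut w * invB * χ)) : HasPositiveForm (φ * χ) := by
  obtain ⟨w, hw | hw⟩ := hφ
  · exact (h w).of_sameCyclen (hw.mul_right χ)
  · exact (h' w).of_sameCyclen (hw.mul_right χ)

lemma mul_invB (hφ : HasPositiveForm φ) : HasPositiveForm (φ * invB) :=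
  hφ.mul_right (fun w => ⟨w, .inr fun _ => rfl⟩) fun w =>
    ⟨w, .inl fun _ => by rw [mul_assoc, invB_mul_self, mul_one]⟩

lemma mul_swapAB (hφ : HasPositiveForm φ) : HasPositiveForm (φ * swapAB) := by
  have sameCyclen (w : List Bool) : SameCyclen (wordAut w * swapAB) (wordAut (w.map not)) := by
    intro y
    rw [← cyclen_swapAB, ← MulAut.mul_apply, ← mul_assoc, swapAB_mul_wordAut, mul_assoc,
      swapAB_mul_self, mul_one]
  refine hφ.mul_right (fun w => ⟨_, .inl (sameCyclen w)⟩) fun w => ⟨w.map not, .inr fun y => ?_⟩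
  calc cyclen ((wordAut w * invB * swapAB) y)
      = cyclen ((wordAut w * swapAB) (invAB (invB y))) := by
        rw [mul_assoc, invB_mul_swapAB]
        rfl
    _ = cyclen ((wordAut (w.map not) * invAB) (invB y)) := sameCyclen w _
    _ = cyclen ((invAB * wordAut (w.map not)) (invB y)) :=
        (outerEq_wordAut_mul_invAB _).cyclen_eq _
    _ = cyclen ((wordAut (w.map not) * invB) y) := cyclen_invAB _

lemma wordAut_mul_invB_mul_τ (w : List Bool) : HasPositiveForm (wordAut w * invB * τ) := by
  rcases List.eq_nil_or_concat w with rfl | ⟨w, x, rfl⟩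
  · exact ⟨[false], .inl fun y => cyclen_invB (τ y)⟩
  have split : wordAut (w.concat x) * invB * τ = wordAut w * (generatorAut x * invB * τ) := by
    rw [List.concat_eq_append, wordAut_append, wordAut_cons, wordAut_nil, mul_one]
    simp only [mul_assoc]
  rw [split]
  cases x
  · exact ⟨w, .inr ((OuterEq.refl _).mul outerEq_τ_mul_invB_mul_τ).cyclen_eq⟩
  · exact of_sameCyclen ((OuterEq.refl _).mul outerEq_σ_mul_invB_mul_τ).cyclen_eq
      ⟨w.map not ++ [true], .inl fun y => by
        rw [← cyclen_swapAB, ← MulAut.mul_apply, ← mul_assoc, ← mul_assoc, swapAB_mul_wordAut,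
          mul_assoc (wordAut _), swapAB_mul_self, mul_one, wordAut_append]
        rfl⟩

lemma mul_τ (hφ : HasPositiveForm φ) : HasPositiveForm (φ * τ) :=
  hφ.mul_right (fun w => ⟨w ++ [false], .inl fun _ => by rw [wordAut_append]; rfl⟩)
    wordAut_mul_invB_mul_τ

lemma mul_conj (hφ : HasPositiveForm φ) (g : F) : HasPositiveForm (φ * MulAut.conj g) :=
  hφ.of_sameCyclen (OuterEq.cyclen_eq ⟨φ g, MulEquiv.ext fun x => by simp [MulAut.conj_apply]⟩)

end HasPositiveForm

theorem hasPositiveForm (φ : MulAut F) : HasPositiveForm φ := by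
  have mem : φ ∈ nielsenSubgroup := nielsenSubgroup_eq_top ▸ Subgroup.mem_top φ
  induction mem using Subgroup.closure_induction_right with
  | one => exact ⟨[], .inl fun _ => rfl⟩
  | mul_right φ _ χ hχ ih =>
    rcases hχ with ⟨g, rfl⟩ | rfl | rfl | rfl
    exacts [ih.mul_conj g, ih.mul_swapAB, ih.mul_invB, ih.mul_τ]
  | mul_inv_cancel φ _ χ hχ ih =>
    rcases hχ with ⟨g, rfl⟩ | rfl | rfl | rfl
    · rw [← map_inv]
      exact ih.mul_conj g⁻¹
    · rw [inv_eq_of_mul_eq_one_left swapAB_mul_self]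
      exact ih.mul_swapAB
    · rw [inv_eq_of_mul_eq_one_left invB_mul_self]
      exact ih.mul_invB
    · refine .of_sameCyclen ((OuterEq.refl φ).mul outerEq_τ_inv).cyclen_eq ?_
      rw [← mul_assoc, ← mul_assoc]
      exact ih.mul_invB.mul_τ.mul_invB

end NormalForm

section Chains

/-- The exponent pairs of the chain with the same letters as the word `w`, in which every pair
contributes a single letter. -/
def exponentPairs (w : List Bool) : List (ℕ × ℕ) := w.map fun x => if x then (1, 0) else (0, 1)

lemma exponentPairs_ne_nil {w : List Bool} (h : w ≠ []) : exponentPairs w ≠ [] := by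
  simpa [exponentPairs] using h

lemma chainLen_exponentPairs (w : List Bool) : chainLen (exponentPairs w) = w.length := by
  induction w with
  | nil => rfl
  | cons x w ih =>
    cases x <;> simp [exponentPairs, chainLen, sigmaCount, tauCount] at ih ⊢ <;> lia

lemma chainC1_exponentPairs (w : List Bool) : chainC1 (exponentPairs w) = wordAut w := by
  rw [chainC1, exponentPairs, wordAut, List.map_map]
  congr 2
  funext x
  cases x <;> simp [generatorAut]

lemma outerEq_generatorAut_inv (x : Bool) :
    OuterEq (generatorAut x)⁻¹ (MulAut.conj invB (generatorAut x)) := by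
  rw [MulAut.conj_apply, inv_eq_of_mul_eq_one_left invB_mul_self]
  cases x
  · exact outerEq_τ_inv
  · exact ⟨1, by rw [map_one, one_mul]; exact σ_inv_eq⟩

lemma outerEq_chainC2_exponentPairs (w : List Bool) :
    OuterEq (chainC2 (exponentPairs w)) (MulAut.conj invB (wordAut w)) := by
  induction w with
  | nil => simpa [exponentPairs, chainC2] using OuterEq.refl 1
  | cons x w ih =>
    have chainC2_cons :
        chainC2 (exponentPairs (x :: w)) = (generatorAut x)⁻¹ * chainC2 (exponentPairs w) := by
      cases x <;> simp [exponentPairs, chainC2, generatorAut]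
    rw [chainC2_cons, wordAut_cons, map_mul]
    exact (outerEq_generatorAut_inv x).mul ih

lemma cyclen_zpow_neg_chainC2 (x : Bool) (n : ℕ) (w : List Bool) (y : F) :
    cyclen ((generatorAut x ^ (-(n : ℤ))) (chainC2 (exponentPairs w) y)) =
      cyclen ((generatorAut x ^ n) (wordAut w (invB y))) := by
  have outerEq : OuterEq (generatorAut x ^ (-(n : ℤ)) * chainC2 (exponentPairs w))
      (MulAut.conj invB (generatorAut x ^ n * wordAut w)) := by
    rw [zpow_neg, zpow_natCast, ← inv_pow, map_mul, map_pow]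
    exact ((outerEq_generatorAut_inv x).pow n).mul (outerEq_chainC2_exponentPairs w)
  rw [← MulAut.mul_apply, outerEq.cyclen_eq, MulAut.conj_apply,
    inv_eq_of_mul_eq_one_left invB_mul_self]
  exact cyclen_invB _

end Chains

theorem stmt12_general (u v : F) (hu : u ≠ 1) (hv : v ≠ 1) (L k : ℕ) (hu_le : cyclen u ≤ L)
    (hv_le : cyclen v ≤ L)
    (H1 : ∀ c : List (ℕ × ℕ), c ≠ [] → chainLen c ≤ L + 2 →
      ((cyclen ((σ ^ (k + 1)) (chainC1 c u)) = cyclen ((σ ^ k) (chainC1 c u)) ↔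
        cyclen ((σ ^ (k + 1)) (chainC1 c v)) = cyclen ((σ ^ k) (chainC1 c v))) ∧
       (cyclen ((τ ^ (k + 1)) (chainC1 c u)) = cyclen ((τ ^ k) (chainC1 c u)) ↔
        cyclen ((τ ^ (k + 1)) (chainC1 c v)) = cyclen ((τ ^ k) (chainC1 c v)))))
    (H2 : ∀ c : List (ℕ × ℕ), c ≠ [] → chainLen c ≤ L + 2 →
      ((cyclen ((σ ^ (-(k : ℤ) - 1)) (chainC2 c u)) = cyclen ((σ ^ (-(k : ℤ))) (chainC2 c u)) ↔
        cyclen ((σ ^ (-(k : ℤ) - 1)) (chainC2 c v)) = cyclen ((σ ^ (-(k : ℤ))) (chainC2 c v))) ∧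
       (cyclen ((τ ^ (-(k : ℤ) - 1)) (chainC2 c u)) = cyclen ((τ ^ (-(k : ℤ))) (chainC2 c u)) ↔
        cyclen ((τ ^ (-(k : ℤ) - 1)) (chainC2 c v)) = cyclen ((τ ^ (-(k : ℤ))) (chainC2 c v))))) :
    ∃ C : ℝ, 0 < C ∧ ∀ φ : MulAut F,
      (cyclen (φ u) : ℝ) ≤ C * cyclen (φ v) ∧ (cyclen (φ v) : ℝ) ≤ C * cyclen (φ u) := by
  have stall : StallTogether (L + 2) k u v := fun w hw hle => by
    simpa only [chainC1_exponentPairs] using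
      H1 (exponentPairs w) (exponentPairs_ne_nil hw) (by rwa [chainLen_exponentPairs])
  have stall_invB : StallTogether (L + 2) k (invB u) (invB v) := fun w hw hle => by
    have := H2 (exponentPairs w) (exponentPairs_ne_nil hw) (by rwa [chainLen_exponentPairs])
    rw [show -(k : ℤ) - 1 = -((k + 1 : ℕ) : ℤ) by push_cast; ring] at this
    have σ_eq := cyclen_zpow_neg_chainC2 true
    have τ_eq := cyclen_zpow_neg_chainC2 false
    simp only [generatorAut, if_true, Bool.false_eq_true, if_false] at σ_eq τ_eq
    simpa only [σ_eq, τ_eq] using this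
  have hL : (0 : ℝ) < L := by exact_mod_cast (cyclen_pos hu).trans_le hu_le
  refine ⟨2 * (2 ^ (L + 2) * L), by positivity, fun φ => ?_⟩
  obtain ⟨w, hw | hw⟩ := hasPositiveForm φ
  · rw [hw u, hw v]
    exact ⟨mod_cast stall.cyclen_wordAut_le_mul hv hu_le hv_le w,
      mod_cast stall.symm.cyclen_wordAut_le_mul hu hv_le hu_le w⟩
  · have hu' : invB u ≠ 1 := (map_ne_one_iff invB invB.injective).2 hu
    have hv' : invB v ≠ 1 := (map_ne_one_iff invB invB.injective).2 hv
    rw [← cyclen_invB] at hu_le hv_le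
    rw [hw u, hw v]
    exact ⟨mod_cast stall_invB.cyclen_wordAut_le_mul hv' hu_le hv_le w,
      mod_cast stall_invB.symm.cyclen_wordAut_le_mul hu' hv_le hu_le w⟩

/-- Theorem 4.7:  here `k = ‖u‖ + 1`. -/
theorem stmt12 (u v : F) (hu : u ≠ 1) (hv : v ≠ 1) (huv : cyclen v ≤ cyclen u)
    (H1 : ∀ c : List (ℕ × ℕ), c ≠ [] → chainLen c ≤ 2 * cyclen u + 5 →
      ((cyclen ((σ ^ (cyclen u + 2)) (chainC1 c u)) = cyclen ((σ ^ (cyclen u + 1)) (chainC1 c u)) ↔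
        cyclen ((σ ^ (cyclen u + 2)) (chainC1 c v)) = cyclen ((σ ^ (cyclen u + 1)) (chainC1 c v))) ∧
       (cyclen ((τ ^ (cyclen u + 2)) (chainC1 c u)) = cyclen ((τ ^ (cyclen u + 1)) (chainC1 c u)) ↔
        cyclen ((τ ^ (cyclen u + 2)) (chainC1 c v)) = cyclen ((τ ^ (cyclen u + 1)) (chainC1 c v)))))
    (H2 : ∀ c : List (ℕ × ℕ), c ≠ [] → chainLen c ≤ 2 * cyclen u + 5 →
      ((cyclen ((σ ^ (-(cyclen u : ℤ) - 2)) (chainC2 c u)) = cyclen ((σ ^ (-(cyclen u : ℤ) - 1)) (chainC2 c u)) ↔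
        cyclen ((σ ^ (-(cyclen u : ℤ) - 2)) (chainC2 c v)) = cyclen ((σ ^ (-(cyclen u : ℤ) - 1)) (chainC2 c v))) ∧
       (cyclen ((τ ^ (-(cyclen u : ℤ) - 2)) (chainC2 c u)) = cyclen ((τ ^ (-(cyclen u : ℤ) - 1)) (chainC2 c u)) ↔
        cyclen ((τ ^ (-(cyclen u : ℤ) - 2)) (chainC2 c v)) = cyclen ((τ ^ (-(cyclen u : ℤ) - 1)) (chainC2 c v))))) :
    ∃ C : ℝ, 0 < C ∧ ∀ φ : MulAut F,
      (cyclen (φ u) : ℝ) ≤ C * cyclen (φ v) ∧ (cyclen (φ v) : ℝ) ≤ C * cyclen (φ u) :=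
  stmt12_general u v hu hv (cyclen u) (cyclen u + 1) le_rfl huv
    (fun c hc hle => H1 c hc (by lia)) fun c hc hle => by
      simpa only [Nat.cast_add_one, neg_add', sub_sub, one_add_one_eq_two] using
        H2 c hc (by lia)
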